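/- Let n ≥ 5. There exists a constant C = C(n) such that for every integer λ ≥ 1, all functions f₁,…,f_n : ℤ → ℂ, and every y ∈ ℤ, |A_λ[f₁,…,f_n](y)| ≤ C (N_λ^{n−2} / r_n(λ)) ∏_{i=1}^n ( N_λ^{−1} Σ_{x ∈ [−N_λ, N_λ] ∩ ℤ} |f_i(y − x)|² )^{1/2}, where N_λ is the nearest integer to 2λ^{1/2}. -/

import Mathlib

open scoped BigOperators ENNReal NNReal
open MeasureTheory Finset

noncomputable section

/-- `sphereCount n lam` is the number of lattice points `x ∈ ℤ^n` with
`x₁² + ⋯ + x_n² = lam`. -/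
def sphereCount (n lam : ℕ) : ℕ :=
  {x : Fin n → ℤ | ∑ i, (x i) ^ 2 = (lam : ℤ)}.ncard

/-- The multilinear spherical average
`A_lam[f₁,…,f_n](y) = (1/r_n(lam)) ∑_{|x|² = lam} f₁(y-x₁)⋯f_n(y-x_n)`. -/
def mulAvg (n lam : ℕ) (f : Fin n → ℤ → ℂ) (y : ℤ) : ℂ :=
  (sphereCount n lam : ℂ)⁻¹ *
    ∑ᶠ x ∈ {x : Fin n → ℤ | ∑ i, (x i) ^ 2 = (lam : ℤ)}, ∏ i, f i (y - x i)

/-- The maximal function `A_*[f₁,…,f_n](y) = sup_{lam ≥ 1} |A_lam[f₁,…,f_n](y)|`. -/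
def maxFn (n : ℕ) (f : Fin n → ℤ → ℂ) (y : ℤ) : ℝ≥0∞ :=
  ⨆ (lam : ℕ) (_ : 1 ≤ lam), (‖mulAvg n lam f y‖₊ : ℝ≥0∞)

/-- The `ℓ^p(ℤ)` norm of a complex-valued function, valued in `ℝ≥0∞`. -/
def lpNorm (p : ℝ) (g : ℤ → ℂ) : ℝ≥0∞ :=
  (∑' x : ℤ, (‖g x‖₊ : ℝ≥0∞) ^ p) ^ (1 / p)

/-- The `ℓ^q(ℤ)` norm of an `ℝ≥0∞`-valued function. -/
def lqNormE (q : ℝ) (g : ℤ → ℝ≥0∞) : ℝ≥0∞ :=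
  (∑' x : ℤ, g x ^ q) ^ (1 / q)

/-!
Write `W_f α = ∑_{|x| ≤ N} f(x) e(x²α)` with `∑ |f(x)|² = 1`. The circle method bounds the
multilinear sum over the sphere by the `n`-th moments of the `n` sums `W_{f_i}`, so everything
rests on the sharp moment estimate `∫ |W_f|^p ≲ N^{p/2 - 2}` for `p > 4`, applied with `p = n ≥ 5`.

If `|W_f| ≥ η √N` on a set `E` of frequencies, then duality eliminates `f`: the sum of
`|∑_{|x| ≤ N} e(x²(α - β))|` over `α, β ∈ E` is at least `η² N |E|²`. By Weyl differencing and
Dirichlet's theorem such a sum can only be large when `α - β` is close to a fraction with small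
denominator, and the moments of the truncated divisor function control how often this happens. The
result is `|E| ≲ η^{-4-3κ} N^{-2}`, which is integrated over the levels `η`. The loss-free range
is `η ≥ N^{-1/8}`; below it, the fourth moment, known up to `N^ε` by the divisor bound, suffices.

Integrals over the circle are replaced throughout by averages over a grid `{j/M}` with `M ≫ N²`.
-/

/-- The additive character `x ↦ exp(2πix)` of `ℝ`, with values in `ℂ`. -/
def e : AddChar ℝ ℂ := Circle.coeHom.compAddChar Real.fourierChar

lemma e_apply (x : ℝ) : e x = Complex.exp (Complex.I * (2 * Real.pi * x : ℝ)) := by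
  rw [mul_comm]
  exact Real.fourierChar_apply x

lemma norm_e (x : ℝ) : ‖e x‖ = 1 := Circle.norm_coe _

lemma conj_e (x : ℝ) : (starRingEnd ℂ) (e x) = e (-x) := by
  rw [AddChar.map_neg_eq_inv, Complex.inv_eq_conj (norm_e x)]

lemma e_sub (x y : ℝ) : e (x - y) = e x * (starRingEnd ℂ) (e y) := by
  rw [conj_e, ← AddChar.map_add_eq_mul, sub_eq_add_neg]

lemma e_natCast_mul (n : ℕ) (x : ℝ) : e (n * x) = e x ^ n := by
  rw [← nsmul_eq_mul, AddChar.map_nsmul_eq_pow]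

lemma e_eq_one_iff {x : ℝ} : e x = 1 ↔ ∃ k : ℤ, x = k := by
  rw [e_apply, Complex.exp_eq_one_iff]
  refine exists_congr fun k ↦ ⟨fun h ↦ ?_, fun h ↦ ?_⟩
  · have hc : (2 * Real.pi * Complex.I) * (x : ℂ) = (2 * Real.pi * Complex.I) * ((k : ℝ) : ℂ) := by
      push_cast at h ⊢
      linear_combination h
    exact Complex.ofReal_injective (mul_left_cancel₀ Complex.two_pi_I_ne_zero hc)
  · rw [h]
    push_cast
    ring

lemma e_intCast (k : ℤ) : e k = 1 := e_eq_one_iff.2 ⟨k, rfl⟩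

lemma e_sum {ι : Type*} (s : Finset ι) (x : ι → ℝ) : e (∑ i ∈ s, x i) = ∏ i ∈ s, e (x i) := by
  classical
  induction s using Finset.induction_on with
  | empty => simp
  | insert i s hi ih => rw [sum_insert hi, prod_insert hi, AddChar.map_add_eq_mul, ih]

/-- The distance from `x` to the nearest integer, usually written `‖x‖` in analytic number
theory. -/
def distInt (x : ℝ) : ℝ := |x - round x|

lemma distInt_nonneg (x : ℝ) : 0 ≤ distInt x := abs_nonneg _

lemma distInt_le (x : ℝ) (k : ℤ) : distInt x ≤ |x - k| := round_le x k

lemma distInt_le_norm_e_sub_one (x : ℝ) : distInt x ≤ ‖e x - 1‖ := by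
  set t : ℝ := x - round x with ht
  have hx : e x = e t := by rw [ht, e_sub, e_intCast, map_one, mul_one]
  have hsin : 2 / Real.pi * |Real.pi * t| ≤ |Real.sin (Real.pi * t)| := by
    refine Real.mul_abs_le_abs_sin ?_
    rw [abs_mul, abs_of_pos Real.pi_pos]
    nlinarith [Real.pi_pos, abs_sub_round x]
  rw [abs_mul, abs_of_pos Real.pi_pos, ← mul_assoc, div_mul_cancel₀ _ Real.pi_ne_zero] at hsin
  rw [hx, e_apply, Complex.norm_exp_I_mul_ofReal_sub_one, norm_mul, Real.norm_eq_abs,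
    Real.norm_eq_abs, abs_two, mul_assoc, mul_div_cancel_left₀ _ two_ne_zero]
  change |t| ≤ _
  linarith [abs_nonneg t]

/-- The grid `{0, 1/M, …, (M-1)/M}`, over which averages replace integrals over the circle. -/
def grid (M : ℕ) : Finset ℝ := (range M).image fun j : ℕ ↦ (j : ℝ) / M

lemma sum_grid {β : Type*} [AddCommMonoid β] {M : ℕ} (hM : 0 < M) (F : ℝ → β) :
    ∑ α ∈ grid M, F α = ∑ j ∈ range M, F ((j : ℝ) / M) := by
  refine sum_image fun i _ j _ hij ↦ ?_
  have hM' : (M : ℝ) ≠ 0 := by positivity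
  exact_mod_cast (div_left_inj' hM').1 hij

lemma sum_grid_e {M : ℕ} (hM : 0 < M) (k : ℤ) :
    ∑ α ∈ grid M, e (k * α) = if (M : ℤ) ∣ k then (M : ℂ) else 0 := by
  have hM' : (M : ℝ) ≠ 0 := by positivity
  have hpow (j : ℕ) : e (k * ((j : ℝ) / M)) = e ((k : ℝ) / M) ^ j := by
    rw [← e_natCast_mul]
    congr 1
    ring
  simp_rw [sum_grid hM, hpow]
  split_ifs with hdvd
  · obtain ⟨m, rfl⟩ := hdvd
    have hone : e (((M * m : ℤ) : ℝ) / M) = 1 := e_eq_one_iff.2 ⟨m, by push_cast; field_simp⟩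
    simp_rw [hone, one_pow, sum_const, card_range, nsmul_one]
  · have hne : e ((k : ℝ) / M) ≠ 1 := fun h ↦ by
      obtain ⟨m, hm⟩ := e_eq_one_iff.1 h
      refine hdvd ⟨m, ?_⟩
      field_simp at hm
      exact_mod_cast hm
    rw [geom_sum_eq hne, ← e_natCast_mul, mul_div_cancel₀ _ hM', e_intCast, sub_self, zero_div]

lemma norm_sum_sq {ι : Type*} (A : Finset ι) (z : ι → ℂ) :
    ((‖∑ a ∈ A, z a‖ ^ 2 : ℝ) : ℂ) = ∑ a ∈ A, ∑ b ∈ A, z a * (starRingEnd ℂ) (z b) := by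
  rw [Complex.ofReal_pow, ← Complex.mul_conj', map_sum, sum_mul_sum]

lemma sum_grid_norm_sum_sq {ι : Type*} {M : ℕ} (hM : 0 < M) {A : Finset ι} {φ : ι → ℤ}
    (hφ : ∀ a ∈ A, ∀ b ∈ A, (M : ℤ) ∣ φ a - φ b → a = b) (c : ι → ℂ) :
    ∑ α ∈ grid M, ‖∑ a ∈ A, c a * e (φ a * α)‖ ^ 2 = M * ∑ a ∈ A, ‖c a‖ ^ 2 := by
  classical
  have hpair (a : ι) (ha : a ∈ A) (b : ι) (hb : b ∈ A) :
      ∑ α ∈ grid M, c a * e (φ a * α) * (starRingEnd ℂ) (c b * e (φ b * α)) =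
        if a = b then (M : ℂ) * ‖c a‖ ^ 2 else 0 := by
    have hfactor (α : ℝ) : c a * e (φ a * α) * (starRingEnd ℂ) (c b * e (φ b * α)) =
        c a * (starRingEnd ℂ) (c b) * e ((φ a - φ b : ℤ) * α) := by
      rw [map_mul (starRingEnd ℂ), Int.cast_sub, sub_mul, e_sub]
      ring
    simp_rw [hfactor, ← mul_sum, sum_grid_e hM]
    split_ifs with hdvd hab hab
    · rw [← hab, Complex.mul_conj', mul_comm]
    · exact absurd (hφ a ha b hb hdvd) hab
    · exact absurd (hab ▸ by simp) hdvd
    · exact mul_zero _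
  apply Complex.ofReal_injective
  rw [Complex.ofReal_sum]
  simp_rw [norm_sum_sq]
  rw [sum_comm]
  push_cast
  rw [mul_sum]
  refine sum_congr rfl fun a ha ↦ ?_
  rw [sum_comm, sum_congr rfl fun b hb ↦ hpair a ha b hb, sum_ite_eq A a, if_pos ha]

lemma sum_range_norm_sum_e_sq {M : ℕ} (hM : 0 < M) {E : Finset ℝ} (hE : E ⊆ grid M) :
    ∑ k ∈ range M, ‖∑ α ∈ E, e (k * α)‖ ^ 2 = M * #E := by
  have hgrid (α : ℝ) (hα : α ∈ E) : ∃ j : ℕ, j < M ∧ (j : ℝ) / M = α := by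
    simpa [grid] using hE hα
  choose! num hnum_lt hnum using hgrid
  have hinj (α : ℝ) (hα : α ∈ E) (β : ℝ) (hβ : β ∈ E)
      (h : (M : ℤ) ∣ (num α : ℤ) - num β) : α = β := by
    have hz := Int.eq_zero_of_abs_lt_dvd h (by
      rw [abs_lt]
      have := hnum_lt α hα
      have := hnum_lt β hβ
      constructor <;> omega)
    rw [← hnum α hα, ← hnum β hβ]
    congr 2
    omega
  have hparseval := sum_grid_norm_sum_sq hM hinj fun _ ↦ 1
  simp only [norm_one, one_pow, sum_const, nsmul_eq_mul, mul_one, one_mul] at hparseval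
  rw [← hparseval, sum_grid hM]
  refine sum_congr rfl fun k _ ↦ ?_
  congr 2
  refine sum_congr rfl fun α hα ↦ ?_
  have hkα : (k : ℝ) * α = ((num α : ℤ) : ℝ) * (k / M) := by
    calc (k : ℝ) * α = k * (num α / M) := by rw [hnum α hα]
      _ = ((num α : ℤ) : ℝ) * (k / M) := by push_cast; ring
  rw [hkα]

lemma natCast_add_one_le_mul_pow {D y : ℝ} (hD : 1 ≤ D) (hy : 1 ≤ y) (hDy : 1 ≤ D * (y - 1))
    (a : ℕ) : (a : ℝ) + 1 ≤ D * y ^ a := by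
  have hbernoulli : 1 + (a : ℝ) * (y - 1) ≤ y ^ a := by
    simpa using one_add_mul_le_pow (a := y - 1) (by linarith) a
  calc (a : ℝ) + 1 ≤ a * (D * (y - 1)) + D := by
        linarith [le_mul_of_one_le_right (Nat.cast_nonneg (α := ℝ) a) hDy]
    _ = D * (1 + a * (y - 1)) := by ring
    _ ≤ D * y ^ a := by gcongr

/- The function `m ↦ d(m) / m ^ ε` is multiplicative, its local factors are bounded, and they are at
most `1` at all primes `p` with `p ^ ε ≥ 2`. -/
lemma exists_card_divisors_le_rpow {ε : ℝ} (hε : 0 < ε) :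
    ∃ C : ℝ, 1 ≤ C ∧ ∀ m : ℕ, 1 ≤ m → (#m.divisors : ℝ) ≤ C * (m : ℝ) ^ ε := by
  obtain ⟨P, hP⟩ := exists_nat_ge ((2 : ℝ) ^ (1 / ε))
  have htwo : (1 : ℝ) < 2 ^ ε := Real.one_lt_rpow one_lt_two hε
  set D : ℝ := max 1 (1 / (2 ^ ε - 1))
  have hD1 : 1 ≤ D := le_max_left _ _
  have hsmall (p : ℕ) (hp : 2 ≤ p) (a : ℕ) : (a : ℝ) + 1 ≤ D * ((p : ℝ) ^ ε) ^ a := by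
    have hpε : (2 : ℝ) ^ ε ≤ (p : ℝ) ^ ε := by gcongr; exact_mod_cast hp
    refine natCast_add_one_le_mul_pow hD1 (by linarith) ?_ a
    calc (1 : ℝ) = 1 / (2 ^ ε - 1) * (2 ^ ε - 1) := (div_mul_cancel₀ _ (by linarith)).symm
      _ ≤ D * ((p : ℝ) ^ ε - 1) := by
        have hpε' : (2 : ℝ) ^ ε - 1 ≤ (p : ℝ) ^ ε - 1 := by linarith
        exact mul_le_mul (le_max_right _ _) hpε' (by linarith) (by positivity)
  have hlarge (p : ℕ) (hp : P ≤ p) (a : ℕ) : (a : ℝ) + 1 ≤ 1 * ((p : ℝ) ^ ε) ^ a := by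
    have hpε : (2 : ℝ) ≤ (p : ℝ) ^ ε := by
      calc (2 : ℝ) = ((2 : ℝ) ^ (1 / ε)) ^ ε := by
            rw [← Real.rpow_mul zero_le_two, one_div_mul_cancel hε.ne', Real.rpow_one]
        _ ≤ (p : ℝ) ^ ε := by
            gcongr
            exact hP.trans (by exact_mod_cast hp)
    exact natCast_add_one_le_mul_pow le_rfl (by linarith) (by linarith) a
  refine ⟨D ^ P, one_le_pow₀ hD1, fun m hm ↦ ?_⟩
  have hm0 : m ≠ 0 := by omega
  have hprod : (m : ℝ) ^ ε = ∏ p ∈ m.primeFactors, ((p : ℝ) ^ ε) ^ m.factorization p := by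
    conv_lhs => rw [← Nat.prod_factorization_pow_eq_self hm0]
    rw [Finsupp.prod, Nat.support_factorization, Nat.cast_prod,
      ← Real.finsetProd_rpow _ _ fun _ _ ↦ by positivity]
    refine prod_congr rfl fun p _ ↦ ?_
    rw [Nat.cast_pow, Real.rpow_pow_comm p.cast_nonneg]
  have hcard : #{p ∈ m.primeFactors | p < P} ≤ P := by
    simpa using card_le_card (s := {p ∈ m.primeFactors | p < P}) (t := range P) fun p hp ↦
      mem_range.2 (mem_filter.1 hp).2
  rw [Nat.card_divisors hm0, hprod]
  push_cast
  calc ∏ p ∈ m.primeFactors, ((m.factorization p : ℝ) + 1)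
      ≤ ∏ p ∈ m.primeFactors, (if p < P then D else 1) * ((p : ℝ) ^ ε) ^ m.factorization p := by
        refine prod_le_prod (fun _ _ ↦ by positivity) fun p hp ↦ ?_
        split_ifs with hpP
        · exact hsmall p (Nat.prime_of_mem_primeFactors hp).two_le _
        · exact hlarge p (not_lt.1 hpP) _
    _ = D ^ #{p ∈ m.primeFactors | p < P} *
          ∏ p ∈ m.primeFactors, ((p : ℝ) ^ ε) ^ m.factorization p := by
        rw [prod_mul_distrib, prod_ite, prod_const, prod_const_one, mul_one]
    _ ≤ D ^ P * ∏ p ∈ m.primeFactors, ((p : ℝ) ^ ε) ^ m.factorization p := by gcongr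

lemma sum_Icc_rpow_sub_one_le {δ : ℝ} (hδ : 0 < δ) (hδ1 : δ ≤ 1) (L : ℕ) :
    ∑ m ∈ Icc 1 L, (m : ℝ) ^ (δ - 1) ≤ (L : ℝ) ^ δ / δ := by
  induction L with
  | zero => simp [hδ.ne']
  | succ L ih =>
    rw [sum_Icc_succ_top (by omega)]
    push_cast
    have hpos : (0 : ℝ) < (L : ℝ) + 1 := by positivity
    have hinv : ((L : ℝ) + 1)⁻¹ ≤ 1 := inv_le_one_of_one_le₀ (by simp)
    have hbernoulli : (1 + -((L : ℝ) + 1)⁻¹) ^ δ ≤ 1 + δ * -((L : ℝ) + 1)⁻¹ :=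
      rpow_one_add_le_one_add_mul_self (by linarith) hδ.le hδ1
    have hL : (L : ℝ) ^ δ ≤ ((L : ℝ) + 1) ^ δ - δ * ((L : ℝ) + 1) ^ (δ - 1) := by
      calc (L : ℝ) ^ δ = (((L : ℝ) + 1) * (1 + -((L : ℝ) + 1)⁻¹)) ^ δ := by
            congr 1
            field_simp
            ring
        _ = ((L : ℝ) + 1) ^ δ * (1 + -((L : ℝ) + 1)⁻¹) ^ δ :=
            Real.mul_rpow hpos.le (by linarith)
        _ ≤ ((L : ℝ) + 1) ^ δ * (1 + δ * -((L : ℝ) + 1)⁻¹) := by gcongr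
        _ = ((L : ℝ) + 1) ^ δ - δ * ((L : ℝ) + 1) ^ (δ - 1) := by
            rw [Real.rpow_sub_one hpos.ne']
            ring
    rw [le_div_iff₀ hδ] at ih ⊢
    linarith

/-- The truncated divisor function: the number of divisors of `k` that are at most `Q`. -/
def divisorCountLE (Q k : ℕ) : ℕ := #{d ∈ Icc 1 Q | d ∣ k}

lemma divisorCountLE_pow (Q k B : ℕ) : divisorCountLE Q k ^ B =
    #{t ∈ Fintype.piFinset fun _ : Fin B ↦ Icc 1 Q | univ.lcm t ∣ k} := by
  have hpi : {t ∈ Fintype.piFinset fun _ : Fin B ↦ Icc 1 Q | univ.lcm t ∣ k} =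
      Fintype.piFinset fun _ : Fin B ↦ {d ∈ Icc 1 Q | d ∣ k} := by
    ext t
    simp only [mem_filter, Fintype.mem_piFinset, Finset.lcm_dvd_iff, mem_univ, true_implies,
      forall_and]
  rw [hpi, Fintype.card_piFinset_const, divisorCountLE]

lemma card_filter_lcm_eq_le {B m : ℕ} (hm : m ≠ 0) (T : Finset (Fin B → ℕ)) :
    #{t ∈ T | univ.lcm t = m} ≤ #m.divisors ^ B := by
  rw [← Fintype.card_piFinset_const]
  refine card_le_card fun t ht ↦ Fintype.mem_piFinset.2 fun i ↦ Nat.mem_divisors.2 ⟨?_, hm⟩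
  rw [← (mem_filter.1 ht).2]
  exact dvd_lcm (mem_univ i)

lemma sum_divisorCountLE_pow_le_sum_card_divisors (B Q K : ℕ) :
    ∑ k ∈ Icc 1 K, (divisorCountLE Q k : ℝ) ^ B ≤
      ∑ m ∈ Icc 1 (Q ^ B), (#m.divisors : ℝ) ^ B * (K / m) := by
  set T : Finset (Fin B → ℕ) := Fintype.piFinset fun _ ↦ Icc 1 Q
  have hmem (t : Fin B → ℕ) (ht : t ∈ T) : univ.lcm t ∈ Icc 1 (Q ^ B) := by
    have ht (i : Fin B) : 1 ≤ t i ∧ t i ≤ Q := mem_Icc.1 (Fintype.mem_piFinset.1 ht i)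
    have hdvd : univ.lcm t ∣ ∏ i, t i := Finset.lcm_dvd fun i hi ↦ dvd_prod_of_mem _ hi
    have hpos : 0 < ∏ i, t i := prod_pos fun i _ ↦ (ht i).1
    refine mem_Icc.2 ⟨Nat.pos_of_dvd_of_pos hdvd hpos, (Nat.le_of_dvd hpos hdvd).trans ?_⟩
    simpa using prod_le_pow_card univ t Q fun i _ ↦ (ht i).2
  have hmultiples (m : ℕ) : (#{k ∈ Icc 1 K | m ∣ k} : ℝ) ≤ K / m := by
    change (#{k ∈ Ioc 0 K | m ∣ k} : ℝ) ≤ K / m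
    rw [Nat.Ioc_filter_dvd_card_eq_div]
    exact Nat.cast_div_le
  calc ∑ k ∈ Icc 1 K, (divisorCountLE Q k : ℝ) ^ B
      = ∑ k ∈ Icc 1 K, ∑ t ∈ T, if univ.lcm t ∣ k then (1 : ℝ) else 0 :=
        sum_congr rfl fun k _ ↦ by rw [sum_boole, ← Nat.cast_pow, divisorCountLE_pow]
    _ = ∑ t ∈ T, (#{k ∈ Icc 1 K | univ.lcm t ∣ k} : ℝ) := by
        rw [sum_comm]
        simp_rw [sum_boole]
    _ ≤ ∑ t ∈ T, (K : ℝ) / univ.lcm t := sum_le_sum fun t _ ↦ hmultiples _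
    _ = ∑ m ∈ Icc 1 (Q ^ B), (#{t ∈ T | univ.lcm t = m} : ℝ) * (K / m) := by
        rw [← sum_fiberwise_of_maps_to hmem]
        refine sum_congr rfl fun m _ ↦ ?_
        rw [← nsmul_eq_mul, ← sum_const]
        exact sum_congr rfl fun t ht ↦ by rw [(mem_filter.1 ht).2]
    _ ≤ ∑ m ∈ Icc 1 (Q ^ B), (#m.divisors : ℝ) ^ B * (K / m) := by
        gcongr with m hm
        have hm0 : m ≠ 0 := Nat.one_le_iff_ne_zero.1 (mem_Icc.1 hm).1
        exact_mod_cast card_filter_lcm_eq_le hm0 T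

lemma exists_sum_divisorCountLE_pow_le {B : ℕ} (hB : B ≠ 0) : ∃ C : ℝ, 1 ≤ C ∧ ∀ Q K : ℕ,
    ∑ k ∈ Icc 1 K, (divisorCountLE Q k : ℝ) ^ B ≤ C * K * Q := by
  have hB1 : (1 : ℝ) ≤ B := by exact_mod_cast Nat.one_le_iff_ne_zero.2 hB
  obtain ⟨C, hC, hdiv⟩ := exists_card_divisors_le_rpow (ε := 1 / (B * B : ℝ)) (by positivity)
  refine ⟨C ^ B * B, by nlinarith [one_le_pow₀ hC (n := B)], fun Q K ↦ ?_⟩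
  have hterm (m : ℕ) (hm : m ∈ Icc 1 (Q ^ B)) :
      (#m.divisors : ℝ) ^ B * (K / m) ≤ C ^ B * K * (m : ℝ) ^ (1 / B - 1 : ℝ) := by
    have hm1 : 1 ≤ m := (mem_Icc.1 hm).1
    have hm0 : (0 : ℝ) < m := by exact_mod_cast hm1
    calc (#m.divisors : ℝ) ^ B * (K / m) ≤ (C * (m : ℝ) ^ (1 / (B * B : ℝ))) ^ B * (K / m) := by
          gcongr
          exact hdiv m hm1
      _ = C ^ B * K * ((m : ℝ) ^ (1 / B : ℝ) / m) := by
          rw [mul_pow, ← Real.rpow_mul_natCast hm0.le]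
          field_simp
      _ = C ^ B * K * (m : ℝ) ^ (1 / B - 1 : ℝ) := by rw [Real.rpow_sub_one hm0.ne']
  calc ∑ k ∈ Icc 1 K, (divisorCountLE Q k : ℝ) ^ B
      ≤ ∑ m ∈ Icc 1 (Q ^ B), C ^ B * K * (m : ℝ) ^ (1 / B - 1 : ℝ) :=
        (sum_divisorCountLE_pow_le_sum_card_divisors B Q K).trans (sum_le_sum hterm)
    _ ≤ C ^ B * K * (((Q ^ B : ℕ) : ℝ) ^ (1 / B : ℝ) / (1 / B)) := by
        rw [← mul_sum]
        gcongr
        exact sum_Icc_rpow_sub_one_le (by positivity)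
          ((div_le_one (by positivity)).2 hB1) (Q ^ B)
    _ = C ^ B * B * K * Q := by
        rw [Nat.cast_pow, one_div, Real.pow_rpow_inv_natCast Q.cast_nonneg hB]
        field_simp

lemma mul_distInt_le_distInt_mul {m : ℕ} {x : ℝ} (h : m * distInt x ≤ 1 / 2) :
    m * distInt x ≤ distInt (m * x) := by
  set k : ℤ := round (m * x) - m * round x with hk
  have habs : m * distInt x = |m * (x - round x)| := by rw [abs_mul, Nat.abs_cast, distInt]
  have hdist : distInt (m * x) = |m * (x - round x) - k| := by
    rw [distInt, hk]
    push_cast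
    ring_nf
  rw [hdist, habs]
  rw [habs] at h
  rcases eq_or_ne k 0 with hk0 | hk0
  · rw [hk0, Int.cast_zero, sub_zero]
  · have hk1 : (1 : ℝ) ≤ |(k : ℝ)| := by exact_mod_cast Int.one_le_abs hk0
    linarith [abs_sub_abs_le_abs_sub (k : ℝ) (m * (x - round x)),
      abs_sub_comm (k : ℝ) (m * (x - round x))]

lemma norm_sum_range_e_mul_distInt_le (n : ℕ) (θ : ℝ) :
    ‖∑ y ∈ range n, e (y * θ)‖ * distInt θ ≤ 2 := by
  simp_rw [e_natCast_mul]
  calc ‖∑ y ∈ range n, e θ ^ y‖ * distInt θ ≤ ‖∑ y ∈ range n, e θ ^ y‖ * ‖e θ - 1‖ := by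
        gcongr
        exact distInt_le_norm_e_sub_one θ
    _ = ‖e θ ^ n - 1‖ := by rw [← norm_mul, geom_sum_mul]
    _ ≤ ‖e θ ^ n‖ + ‖(1 : ℂ)‖ := norm_sub_le _ _
    _ = 2 := by
        rw [norm_pow, norm_e, one_pow, norm_one]
        norm_num

lemma norm_sum_range_e_le (n : ℕ) (θ : ℕ → ℝ) : ‖∑ y ∈ range n, e (θ y)‖ ≤ n := by
  simpa using norm_sum_le_of_le (range n) fun y _ ↦ (norm_e (θ y)).le

/-! ### Van der Corput differencing -/

lemma norm_sum_range_sq_le_re (n : ℕ) (u : ℕ → ℂ) :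
    ‖∑ x ∈ range n, u x‖ ^ 2 ≤
      2 * (∑ h ∈ range n, ∑ y ∈ range (n - h), u (y + h) * (starRingEnd ℂ) (u y)).re := by
  have hdiag : ∑ h ∈ range n, ∑ y ∈ range (n - h), u (y + h) * (starRingEnd ℂ) (u y) =
      ∑ x ∈ range n, u x * (starRingEnd ℂ) (∑ y ∈ range (x + 1), u y) := by
    rw [← sum_range_diag_flip n fun h y ↦ u (y + h) * (starRingEnd ℂ) (u y)]
    refine sum_congr rfl fun x _ ↦ ?_
    rw [map_sum, mul_sum, ← sum_range_reflect]
    refine sum_congr rfl fun h hh ↦ ?_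
    have hhx : h ≤ x := Nat.lt_succ_iff.1 (mem_range.1 hh)
    rw [add_tsub_cancel_right, Nat.sub_sub_self hhx, Nat.add_sub_cancel' hhx]
  rw [hdiag]
  clear hdiag
  induction n with
  | zero => simp
  | succ n ih =>
    set S : ℂ := ∑ x ∈ range n, u x
    have hexpand : ‖S + u n‖ ^ 2 = ‖S‖ ^ 2 + ‖u n‖ ^ 2 + 2 * (u n * (starRingEnd ℂ) S).re := by
      rw [add_comm S, Complex.sq_norm, Complex.normSq_add, ← Complex.sq_norm, ← Complex.sq_norm]
      ring
    have hre : (u n * (starRingEnd ℂ) (S + u n)).re =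
        (u n * (starRingEnd ℂ) S).re + ‖u n‖ ^ 2 := by
      rw [map_add, mul_add, Complex.mul_conj', Complex.add_re, ← Complex.ofReal_pow,
        Complex.ofReal_re]
    rw [sum_range_succ, sum_range_succ, sum_range_succ, Complex.add_re, hexpand, hre]
    linarith [sq_nonneg ‖u n‖]

lemma norm_sum_range_sq_le (n : ℕ) (u : ℕ → ℂ) :
    ‖∑ x ∈ range n, u x‖ ^ 2 ≤
      2 * ∑ h ∈ range n, ‖∑ y ∈ range (n - h), u (y + h) * (starRingEnd ℂ) (u y)‖ := by
  refine (norm_sum_range_sq_le_re n u).trans ?_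
  gcongr
  exact (Complex.re_le_norm _).trans (norm_sum_le _ _)

/-! ### Weyl's inequality for squares -/

/-- The quadratic Weyl sum of length `N` with coefficients `f`; `weylSum N 1` is the classical
one. -/
def weylSum (N : ℕ) (f : ℤ → ℂ) (α : ℝ) : ℂ :=
  ∑ x ∈ Icc (-N : ℤ) N, f x * e ((x : ℝ) ^ 2 * α)

lemma norm_weylSum_one_le (N : ℕ) (α : ℝ) : ‖weylSum N 1 α‖ ≤ 2 * N + 1 := by
  calc ‖weylSum N 1 α‖ ≤ ∑ _x ∈ Icc (-N : ℤ) N, (1 : ℝ) :=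
        norm_sum_le_of_le _ fun x _ ↦ by rw [Pi.one_apply, one_mul, norm_e]
    _ = 2 * N + 1 := by
        have hcard : #(Icc (-N : ℤ) N) = 2 * N + 1 := by
          rw [Int.card_Icc]
          omega
        rw [sum_const, hcard, nsmul_one]
        push_cast
        rfl

lemma norm_weylSum_one_sq_le (N : ℕ) (α : ℝ) : ‖weylSum N 1 α‖ ^ 2 ≤ 2 * (2 * N + 1) +
    2 * ∑ h ∈ Icc 1 (2 * N), ‖∑ y ∈ range (2 * N + 1 - h), e (y * (h * (2 * α)))‖ := by
  set u : ℕ → ℂ := fun y ↦ e (((y : ℝ) - N) ^ 2 * α) with hu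
  have hsum : weylSum N 1 α = ∑ y ∈ range (2 * N + 1), u y := by
    have hlen : ((N : ℤ) + 1 - -N).toNat = 2 * N + 1 := by omega
    rw [weylSum, Int.Icc_eq_finset_map, sum_map, hlen]
    refine sum_congr rfl fun y _ ↦ ?_
    simp [hu]
    ring_nf
  have hdiff (h : ℕ) : ‖∑ y ∈ range (2 * N + 1 - h), u (y + h) * (starRingEnd ℂ) (u y)‖ =
      ‖∑ y ∈ range (2 * N + 1 - h), e (y * (h * (2 * α)))‖ := by
    have hfactor (y : ℕ) : u (y + h) * (starRingEnd ℂ) (u y) =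
        e ((h ^ 2 - 2 * h * N) * α) * e (y * (h * (2 * α))) := by
      rw [hu, ← e_sub, ← AddChar.map_add_eq_mul]
      congr 1
      push_cast
      ring
    simp_rw [hfactor, ← mul_sum, norm_mul, norm_e, one_mul]
  have hzero : ‖∑ y ∈ range (2 * N + 1 - 0), e (y * ((0 : ℕ) * (2 * α)))‖ ≤ 2 * N + 1 := by
    exact_mod_cast norm_sum_range_e_le (2 * N + 1) _
  have hvdc := norm_sum_range_sq_le (2 * N + 1) u
  simp_rw [← hsum, hdiff] at hvdc
  rw [range_eq_Ico, sum_eq_sum_Ico_succ_bot (by omega), zero_add,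
    Ico_add_one_right_eq_Icc] at hvdc
  linarith

/-! ### Sums controlled by the distance to the nearest integer -/

lemma exists_isCoprime_abs_mul_sub_le (θ : ℝ) {n : ℕ} (hn : 0 < n) : ∃ (a : ℤ) (q : ℕ),
    1 ≤ q ∧ q ≤ n ∧ IsCoprime (q : ℤ) a ∧ |q * θ - a| * n ≤ 1 := by
  obtain ⟨ρ, hρ, hden⟩ := Real.exists_rat_abs_sub_le_and_den_le θ hn
  refine ⟨ρ.num, ρ.den, ρ.den_pos, hden, (Rat.isCoprime_num_den ρ).symm, ?_⟩
  have hden0 : (0 : ℝ) < ρ.den := by exact_mod_cast ρ.den_pos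
  have hnum : (ρ.num : ℝ) = ρ.den * ρ := by
    rw [mul_comm]
    exact_mod_cast (Rat.mul_den_eq_num ρ).symm
  rw [le_div_iff₀ (by positivity)] at hρ
  calc |ρ.den * θ - ρ.num| * n = |θ - ρ| * (n * ρ.den) := by
        rw [hnum, ← mul_sub, abs_mul, abs_of_pos hden0]
        ring
    _ ≤ |θ - ρ| * ((n + 1) * ρ.den) := by
        gcongr
        linarith
    _ ≤ 1 := hρ

lemma sum_Icc_natCast_inv_le {δ : ℝ} (hδ : 0 < δ) (hδ1 : δ ≤ 1) (q : ℕ) :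
    ∑ r ∈ Icc (-q : ℤ) q, |(r : ℝ)|⁻¹ ≤ 2 * (q : ℝ) ^ δ / δ := by
  have heven : Function.Even fun r : ℤ ↦ |(r : ℝ)|⁻¹ := fun r ↦ by simp
  rw [sum_Icc_of_even_eq_range heven, range_eq_Ico, sum_eq_sum_Ico_succ_bot q.succ_pos,
    Nat.succ_eq_add_one, Ico_add_one_right_eq_Icc, zero_add, two_nsmul]
  have hterm (i : ℕ) (hi : i ∈ Icc 1 q) : |((i : ℤ) : ℝ)|⁻¹ ≤ (i : ℝ) ^ (δ - 1) := by
    rw [Int.cast_natCast, Nat.abs_cast, ← Real.rpow_neg_one]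
    exact Real.rpow_le_rpow_of_exponent_le (by exact_mod_cast (mem_Icc.1 hi).1) (by linarith)
  have hsum := (sum_le_sum hterm).trans (sum_Icc_rpow_sub_one_le hδ hδ1 q)
  rw [mul_div_assoc]
  simp only [Nat.cast_zero, Int.cast_zero, abs_zero, inv_zero, zero_add, sub_zero]
  linarith

lemma mul_rpow_one_sub_le {x y B m δ : ℝ} (hx : 0 ≤ x) (hxB : x ≤ B) (hy : 0 ≤ y) (hm : 0 < m)
    (hxy : x * y ≤ 2 * m⁻¹) (hδ : 0 ≤ δ) (hδ1 : δ < 1) :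
    x * y ^ (1 - δ) ≤ 2 * B ^ δ * m ^ (δ - 1) := by
  have hB : 0 ≤ B := hx.trans hxB
  calc x * y ^ (1 - δ) = x ^ δ * (x * y) ^ (1 - δ) := by
        rw [Real.mul_rpow hx hy, ← mul_assoc, ← Real.rpow_add' hx (by norm_num),
          add_sub_cancel, Real.rpow_one]
    _ ≤ B ^ δ * (2 * m⁻¹) ^ (1 - δ) := by
        have := sub_pos.2 hδ1
        gcongr
    _ = B ^ δ * (2 ^ (1 - δ) * m ^ (δ - 1)) := by
        rw [Real.mul_rpow zero_le_two (by positivity), Real.inv_rpow hm.le,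
          ← Real.rpow_neg hm.le, neg_sub]
    _ ≤ B ^ δ * (2 * m ^ (δ - 1)) := by
        gcongr
        exact Real.rpow_le_self_of_one_le one_le_two (by linarith)
    _ = 2 * B ^ δ * m ^ (δ - 1) := by ring

section RationalApproximation

variable {θ : ℝ} {a : ℤ} {q H : ℕ} {g : ℕ → ℝ}

lemma not_dvd_residue (hqa : IsCoprime (q : ℤ) a)
    (hθ : |q * θ - a| * (4 * H) ≤ 1) {h : ℕ} (hh : h ∈ Icc 1 H) (hdvd : ¬ q ∣ h) :
    1 ≤ |((h * a - q * round (h * θ) : ℤ) : ℝ)| ∧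
    |((h * a - q * round (h * θ) : ℤ) : ℝ)| ≤ q ∧
    3 / 4 * |((h * a - q * round (h * θ) : ℤ) : ℝ)| ≤ q * distInt (h * θ) := by
  set r : ℤ := h * a - q * round (h * θ) with hr
  have hr0 : r ≠ 0 := fun h0 ↦ hdvd <| by
    have hqha : (q : ℤ) ∣ h * a := ⟨round (h * θ), by linarith⟩
    exact_mod_cast hqa.dvd_of_dvd_mul_right hqha
  have hr1 : (1 : ℝ) ≤ |(r : ℝ)| := by exact_mod_cast Int.one_le_abs hr0
  have hhH : (h : ℝ) ≤ H := by exact_mod_cast (mem_Icc.1 hh).2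
  have herr : |h * (q * θ - a)| ≤ 1 / 4 := by
    rw [abs_mul, Nat.abs_cast]
    nlinarith [abs_nonneg (q * θ - a)]
  have hr_le : |(r : ℝ)| ≤ q * distInt (h * θ) + 1 / 4 := by
    calc |(r : ℝ)| = |q * (h * θ - round (h * θ)) - h * (q * θ - a)| := by
          rw [hr]
          push_cast
          ring_nf
      _ ≤ |q * (h * θ - round (h * θ))| + |h * (q * θ - a)| := abs_sub _ _
      _ ≤ q * distInt (h * θ) + 1 / 4 := by
          rw [abs_mul, Nat.abs_cast]
          exact add_le_add le_rfl herr
  have hhalf : q * distInt (h * θ) ≤ q * (1 / 2) := by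
    gcongr
    exact abs_sub_round _
  exact ⟨hr1, by linarith, by linarith⟩

/- The map `h ↦ (⌊h / q⌋, r)` with `r = h a - q round (h θ)` is injective, and `distInt (h θ)` is
about `|r| / q` away from the multiples of `q`. -/
lemma sum_not_dvd_le_sum_inv (hqa : IsCoprime (q : ℤ) a)
    (hθ : |q * θ - a| * (4 * H) ≤ 1) (hg0 : ∀ h, 0 ≤ g h)
    (hg : ∀ h, g h * distInt (h * θ) ≤ 2) :
    ∑ h ∈ Icc 1 H with ¬ q ∣ h, g h ≤
      (H / q + 1 : ℕ) * (3 * q * ∑ r ∈ Icc (-q : ℤ) q, |(r : ℝ)|⁻¹) := by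
  set ψ : ℕ → ℕ × ℤ := fun h ↦ (h / q, h * a - q * round (h * θ))
  set T : Finset (ℕ × ℤ) := range (H / q + 1) ×ˢ Icc (-q : ℤ) q with hT
  have hinj : Set.InjOn ψ ({h ∈ Icc 1 H | ¬ q ∣ h} : Finset ℕ) := by
    intro h _ h' _ heq
    obtain ⟨hdiv, hres⟩ := Prod.mk.inj heq
    have hqmul : (q : ℤ) ∣ (h' - h) * a := ⟨round (h' * θ) - round (h * θ), by linarith⟩
    have hmod : h % q = h' % q :=
      Nat.modEq_iff_dvd.2 (hqa.dvd_of_dvd_mul_right hqmul)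
    rw [← Nat.div_add_mod h q, ← Nat.div_add_mod h' q, hdiv, hmod]
  have hmaps : ∀ h ∈ ({h ∈ Icc 1 H | ¬ q ∣ h} : Finset ℕ), ψ h ∈ T := by
    intro h hh
    obtain ⟨hh, hdvd⟩ := mem_filter.1 hh
    have hres := abs_le.1 (not_dvd_residue hqa hθ hh hdvd).2.1
    refine mem_product.2 ⟨mem_range.2 (Nat.lt_succ_of_le ?_), mem_Icc.2 ⟨?_, ?_⟩⟩
    · exact Nat.div_le_div_right (mem_Icc.1 hh).2
    · exact_mod_cast hres.1
    · exact_mod_cast hres.2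
  have hterm : ∀ h ∈ ({h ∈ Icc 1 H | ¬ q ∣ h} : Finset ℕ), g h ≤ 3 * q * |((ψ h).2 : ℝ)|⁻¹ := by
    intro h hh
    obtain ⟨hh, hdvd⟩ := mem_filter.1 hh
    obtain ⟨hone, -, hdist⟩ := not_dvd_residue hqa hθ hh hdvd
    rw [← div_eq_mul_inv, le_div_iff₀ (by linarith)]
    nlinarith [mul_le_mul_of_nonneg_left hdist (hg0 h),
      mul_le_mul_of_nonneg_left (hg h) (Nat.cast_nonneg (α := ℝ) q)]
  calc ∑ h ∈ Icc 1 H with ¬ q ∣ h, g h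
      ≤ ∑ h ∈ Icc 1 H with ¬ q ∣ h, 3 * q * |((ψ h).2 : ℝ)|⁻¹ := sum_le_sum hterm
    _ = ∑ p ∈ ({h ∈ Icc 1 H | ¬ q ∣ h} : Finset ℕ).image ψ, 3 * q * |(p.2 : ℝ)|⁻¹ := by
        rw [sum_image hinj]
    _ ≤ ∑ p ∈ T, 3 * q * |(p.2 : ℝ)|⁻¹ :=
        sum_le_sum_of_subset_of_nonneg (image_subset_iff.2 hmaps) fun _ _ _ ↦ by positivity
    _ = (H / q + 1 : ℕ) * (3 * q * ∑ r ∈ Icc (-q : ℤ) q, |(r : ℝ)|⁻¹) := by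
        rw [hT, sum_product]
        dsimp only
        rw [sum_const, card_range, nsmul_eq_mul, ← mul_sum]

lemma sum_not_dvd_le (hqa : IsCoprime (q : ℤ) a) (hq : 1 ≤ q) (hqH : q ≤ 4 * H)
    (hθ : |q * θ - a| * (4 * H) ≤ 1) (hg0 : ∀ h, 0 ≤ g h)
    (hg : ∀ h, g h * distInt (h * θ) ≤ 2) {δ : ℝ} (hδ : 0 < δ) (hδ1 : δ ≤ 1) :
    ∑ h ∈ Icc 1 H with ¬ q ∣ h, g h ≤ 120 / δ * (H : ℝ) ^ (1 + δ) := by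
  have hblocks : ((H / q + 1 : ℕ) : ℝ) * q ≤ 5 * H := by
    have hnat : (H / q + 1) * q ≤ 5 * H := by linarith [Nat.div_mul_le_self H q]
    exact_mod_cast hnat
  have hqδ : (q : ℝ) ^ δ ≤ 4 * (H : ℝ) ^ δ := by
    calc (q : ℝ) ^ δ ≤ (4 * H) ^ δ := by
          gcongr
          exact_mod_cast hqH
      _ = 4 ^ δ * (H : ℝ) ^ δ := Real.mul_rpow (by norm_num) (by positivity)
      _ ≤ 4 * (H : ℝ) ^ δ := by
          gcongr
          exact Real.rpow_le_self_of_one_le (by norm_num) hδ1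
  calc ∑ h ∈ Icc 1 H with ¬ q ∣ h, g h
      ≤ (H / q + 1 : ℕ) * (3 * q * (2 * (q : ℝ) ^ δ / δ)) := by
        refine (sum_not_dvd_le_sum_inv hqa hθ hg0 hg).trans ?_
        gcongr
        exact sum_Icc_natCast_inv_le hδ hδ1 q
    _ = ((H / q + 1 : ℕ) * q) * (6 / δ * (q : ℝ) ^ δ) := by ring
    _ ≤ (5 * H) * (6 / δ * (4 * (H : ℝ) ^ δ)) := by gcongr
    _ = 120 / δ * (H : ℝ) ^ (1 + δ) := by
        rw [Real.rpow_one_add' (by positivity) (by positivity)]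
        ring

lemma sum_Icc_filter_dvd (hq : 0 < q) (g : ℕ → ℝ) (H : ℕ) :
    ∑ h ∈ Icc 1 H with q ∣ h, g h = ∑ m ∈ Icc 1 (H / q), g (q * m) := by
  refine (sum_nbij' (fun m ↦ q * m) (fun h ↦ h / q) ?_ ?_ ?_ ?_ fun _ _ ↦ rfl).symm
  · intro m hm
    obtain ⟨hm1, hmH⟩ := mem_Icc.1 hm
    refine mem_filter.2 ⟨mem_Icc.2 ⟨Nat.mul_pos hq hm1, ?_⟩, dvd_mul_right q m⟩
    exact (Nat.mul_le_mul_left q hmH).trans (Nat.mul_div_le H q)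
  · intro h hh
    obtain ⟨hh, hdvd⟩ := mem_filter.1 hh
    obtain ⟨hh1, hhH⟩ := mem_Icc.1 hh
    exact mem_Icc.2 ⟨Nat.div_pos (Nat.le_of_dvd hh1 hdvd) hq, Nat.div_le_div_right hhH⟩
  · exact fun m _ ↦ Nat.mul_div_cancel_left m hq
  · exact fun h hh ↦ Nat.mul_div_cancel' (mem_filter.1 hh).2

lemma sum_dvd_mul_le (hq : 0 < q) {B : ℝ} (hB : 0 ≤ B) (hg : ∀ h, g h ≤ B) (H : ℕ) :
    (∑ h ∈ Icc 1 H with q ∣ h, g h) * q ≤ B * H := by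
  have hnat : ((H / q : ℕ) : ℝ) * q ≤ H := by exact_mod_cast Nat.div_mul_le_self H q
  calc (∑ h ∈ Icc 1 H with q ∣ h, g h) * q ≤ (∑ _m ∈ Icc 1 (H / q), B) * q := by
        rw [sum_Icc_filter_dvd hq]
        gcongr
        exact hg _
    _ = B * ((H / q : ℕ) * q) := by
        rw [sum_const, Nat.card_Icc, Nat.add_sub_cancel, nsmul_eq_mul]
        ring
    _ ≤ B * H := by gcongr

lemma sum_dvd_mul_distInt_rpow_le (hq : 0 < q) (hH : H * distInt (q * θ) ≤ 1 / 4)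
    {B : ℝ} (hg0 : ∀ h, 0 ≤ g h) (hgB : ∀ h, g h ≤ B) (hg : ∀ h, g h * distInt (h * θ) ≤ 2)
    {δ : ℝ} (hδ : 0 < δ) (hδ1 : δ < 1) :
    (∑ h ∈ Icc 1 H with q ∣ h, g h) * distInt (q * θ) ^ (1 - δ) ≤ 2 / δ * (B * H) ^ δ := by
  have hB : 0 ≤ B := (hg0 0).trans (hgB 0)
  set X : ℝ := distInt (q * θ)
  have hX0 : 0 ≤ X := distInt_nonneg _
  have hterm (m : ℕ) (hm : m ∈ Icc 1 (H / q)) :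
      g (q * m) * X ^ (1 - δ) ≤ 2 * B ^ δ * (m : ℝ) ^ (δ - 1) := by
    obtain ⟨hm1, hmH⟩ := mem_Icc.1 hm
    have hm0 : (0 : ℝ) < m := by exact_mod_cast hm1
    have hmX : m * X ≤ distInt ((q * m : ℕ) * θ) := by
      have hmH' : (m : ℝ) ≤ H := by exact_mod_cast hmH.trans (Nat.div_le_self H q)
      have hcast : ((q * m : ℕ) : ℝ) * θ = m * (q * θ) := by
        push_cast
        ring
      rw [hcast]
      exact mul_distInt_le_distInt_mul (by nlinarith)
    set G : ℝ := g (q * m)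
    have hG0 : 0 ≤ G := hg0 _
    have hGX : G * X ≤ 2 * (m : ℝ)⁻¹ := by
      rw [← div_eq_mul_inv, le_div_iff₀ hm0]
      nlinarith [mul_le_mul_of_nonneg_left hmX hG0, hg (q * m)]
    exact mul_rpow_one_sub_le hG0 (hgB _) hX0 hm0 hGX hδ.le hδ1
  rw [sum_Icc_filter_dvd hq, sum_mul]
  calc ∑ m ∈ Icc 1 (H / q), g (q * m) * X ^ (1 - δ)
      ≤ 2 * B ^ δ * ∑ m ∈ Icc 1 (H / q), (m : ℝ) ^ (δ - 1) := by
        rw [mul_sum]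
        exact sum_le_sum hterm
    _ ≤ 2 * B ^ δ * (((H / q : ℕ) : ℝ) ^ δ / δ) := by
        gcongr
        exact sum_Icc_rpow_sub_one_le hδ hδ1.le _
    _ ≤ 2 * B ^ δ * ((H : ℝ) ^ δ / δ) := by
        gcongr
        exact Nat.div_le_self H q
    _ = 2 / δ * (B * H) ^ δ := by
        rw [Real.mul_rpow hB H.cast_nonneg]
        ring

end RationalApproximation

lemma two_mul_rpow_one_add_le {x δ : ℝ} (hx : 0 ≤ x) (hδ : δ ≤ 1) :
    (2 * x) ^ (1 + δ) ≤ 4 * x ^ (1 + δ) := by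
  rw [Real.mul_rpow zero_le_two hx]
  gcongr
  calc (2 : ℝ) ^ (1 + δ) ≤ 2 ^ (2 : ℝ) := by gcongr <;> linarith
    _ = 4 := by norm_num

lemma six_mul_sq_rpow_le {x δ : ℝ} (hx : 0 ≤ x) (hδ : δ ≤ 1) :
    (6 * x ^ 2) ^ δ ≤ 6 * x ^ (2 * δ) := by
  rw [Real.mul_rpow (by norm_num) (by positivity), Real.rpow_mul hx, Real.rpow_two]
  gcongr
  exact Real.rpow_le_self_of_one_le (by norm_num) hδ

lemma exists_denominator_norm_weylSum_one_sq_le {N : ℕ} (hN : 1 ≤ N) (α : ℝ) {δ : ℝ} (hδ : 0 < δ)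
    (hδ1 : δ < 1) : ∃ (q : ℕ) (S : ℝ), 1 ≤ q ∧
      ‖weylSum N 1 α‖ ^ 2 ≤ 972 / δ * (N : ℝ) ^ (1 + δ) + 2 * S ∧
      S * q ≤ 6 * (N : ℝ) ^ 2 ∧
      S * distInt (q * (2 * α)) ^ (1 - δ) ≤ 12 / δ * (N : ℝ) ^ (2 * δ) := by
  have hN1 : (1 : ℝ) ≤ N := by exact_mod_cast hN
  obtain ⟨a, q, hq, hqH, hqa, happrox⟩ :=
    exists_isCoprime_abs_mul_sub_le (2 * α) (n := 4 * (2 * N)) (by omega)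
  set H : ℕ := 2 * N with hH
  have hHN : (H : ℝ) = 2 * N := by rw [hH]; push_cast; rfl
  set g : ℕ → ℝ := fun h ↦ ‖∑ y ∈ range (H + 1 - h), e (y * (h * (2 * α)))‖
  have hg0 (h : ℕ) : 0 ≤ g h := norm_nonneg _
  have hgB (h : ℕ) : g h ≤ 3 * N := by
    have hlen : ((H + 1 - h : ℕ) : ℝ) ≤ H + 1 := by exact_mod_cast Nat.sub_le _ _
    linarith [norm_sum_range_e_le (H + 1 - h) fun y ↦ y * (h * (2 * α))]
  have hg (h : ℕ) : g h * distInt (h * (2 * α)) ≤ 2 := norm_sum_range_e_mul_distInt_le _ _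
  push_cast at happrox
  have hnot := sum_not_dvd_le hqa hq hqH happrox hg0 hg hδ hδ1.le
  refine ⟨q, ∑ h ∈ Icc 1 H with q ∣ h, g h, hq, ?_, ?_, ?_⟩
  · have hweyl := norm_weylSum_one_sq_le N α
    rw [← sum_filter_add_sum_filter_not _ fun h ↦ q ∣ h] at hweyl
    have hHpow : (H : ℝ) ^ (1 + δ) ≤ 4 * (N : ℝ) ^ (1 + δ) := by
      rw [hHN]
      exact two_mul_rpow_one_add_le N.cast_nonneg hδ1.le
    have hNpow : (N : ℝ) ≤ (N : ℝ) ^ (1 + δ) / δ :=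
      (Real.self_le_rpow_of_one_le hN1 (by linarith)).trans
        (le_div_self (by positivity) hδ hδ1.le)
    calc ‖weylSum N 1 α‖ ^ 2
        ≤ 6 * N + 2 * (120 / δ * (H : ℝ) ^ (1 + δ)) + 2 * ∑ h ∈ Icc 1 H with q ∣ h, g h := by
          linarith
      _ ≤ 12 * ((N : ℝ) ^ (1 + δ) / δ) + 2 * (120 / δ * (4 * (N : ℝ) ^ (1 + δ))) +
            2 * ∑ h ∈ Icc 1 H with q ∣ h, g h := by
          gcongr
          norm_num
      _ = 972 / δ * (N : ℝ) ^ (1 + δ) + 2 * ∑ h ∈ Icc 1 H with q ∣ h, g h := by ring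
  · refine (sum_dvd_mul_le hq (by positivity) hgB H).trans_eq ?_
    rw [hHN]
    ring
  · have hdist : H * distInt (q * (2 * α)) ≤ 1 / 4 := by
      nlinarith [distInt_le (q * (2 * α)) a]
    refine (sum_dvd_mul_distInt_rpow_le hq hdist hg0 hgB hg hδ hδ1).trans ?_
    calc 2 / δ * (3 * N * H : ℝ) ^ δ = 2 / δ * (6 * (N : ℝ) ^ 2) ^ δ := by
          rw [hHN]
          ring_nf
      _ ≤ 2 / δ * (6 * (N : ℝ) ^ (2 * δ)) := by
          gcongr
          exact six_mul_sq_rpow_le N.cast_nonneg hδ1.le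
      _ = 12 / δ * (N : ℝ) ^ (2 * δ) := by ring

/- The differenced sum is dominated by the multiples of `q` as soon as `N * η ^ 4` is large. -/
lemma exists_denominator_of_le_norm_weylSum_one {N : ℕ} (hN : 1 ≤ N) {α δ η : ℝ} (hδ : 0 < δ)
    (hδ2 : δ ≤ 1 / 2) (hη : 0 < η) (hlarge : (2000 / δ) ^ 2 ≤ N * η ^ 4)
    (hsum : η * N ≤ ‖weylSum N 1 α‖) :
    ∃ (q : ℕ) (S : ℝ), 1 ≤ q ∧ η ^ 2 * N ^ 2 ≤ 4 * S ∧ S * q ≤ 6 * (N : ℝ) ^ 2 ∧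
      S * distInt (q * (2 * α)) ^ (1 - δ) ≤ 12 / δ * (N : ℝ) ^ (2 * δ) := by
  have hN1 : (1 : ℝ) ≤ N := by exact_mod_cast hN
  have hN0 : (0 : ℝ) < N := by linarith
  obtain ⟨q, S, hq, hweyl, hSq, hSdist⟩ :=
    exists_denominator_norm_weylSum_one_sq_le hN α hδ (by linarith)
  refine ⟨q, S, hq, ?_, hSq, hSdist⟩
  have hmain : 2000 / δ * (N : ℝ) ^ (1 + δ) ≤ η ^ 2 * N ^ 2 := by
    have hsqrt : 2000 / δ ≤ √N * η ^ 2 := by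
      refine le_of_sq_le_sq ?_ (by positivity)
      rwa [mul_pow, Real.sq_sqrt hN0.le, ← pow_mul]
    calc 2000 / δ * (N : ℝ) ^ (1 + δ) ≤ √N * η ^ 2 * (N : ℝ) ^ (1 + δ) := by gcongr
      _ = η ^ 2 * (N : ℝ) ^ (1 / 2 + (1 + δ)) := by
          rw [Real.rpow_add hN0 (1 / 2), Real.sqrt_eq_rpow]
          ring
      _ ≤ η ^ 2 * (N : ℝ) ^ (2 : ℝ) := by
          gcongr
          linarith
      _ = η ^ 2 * N ^ 2 := by rw [Real.rpow_two]
  have hsq : (η * N) ^ 2 ≤ ‖weylSum N 1 α‖ ^ 2 := by gcongr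
  have hhalf : 972 / δ * (N : ℝ) ^ (1 + δ) ≤ 2000 / δ * (N : ℝ) ^ (1 + δ) / 2 := by
    rw [mul_div_right_comm, div_div, mul_comm δ, ← div_div]
    gcongr
    norm_num
  linarith

lemma mul_rpow_two_div_mul_rpow {x y z b : ℝ} (hx : 0 ≤ x) (hy : 0 < y) (hz : 0 ≤ z) (hb : b ≠ 0) :
    (x * y ^ 2 * z ^ b) ^ (2 / b) * y ^ (2 * (1 - 2 / b)) = z ^ 2 * y ^ 2 * x ^ (2 / b) := by
  calc (x * y ^ 2 * z ^ b) ^ (2 / b) * y ^ (2 * (1 - 2 / b))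
      = x ^ (2 / b) * (z ^ b) ^ (2 / b) * (y ^ (2 * (2 / b)) * y ^ (2 * (1 - 2 / b))) := by
        rw [Real.mul_rpow (by positivity) (by positivity), Real.mul_rpow hx (by positivity),
          Real.rpow_mul hy.le 2 (2 / b), Real.rpow_two]
        ring
    _ = z ^ 2 * y ^ 2 * x ^ (2 / b) := by
        rw [← Real.rpow_mul hz, mul_div_cancel₀ _ hb, ← Real.rpow_add hy,
          show 2 * (2 / b) + 2 * (1 - 2 / b) = 2 by ring, Real.rpow_two, Real.rpow_two]
        ring

lemma le_sq_of_rpow_two_div_le {x y b : ℝ} (hx : 0 ≤ x) (hb : 0 < b) (hb4 : b ≤ 4) (hy : 1 ≤ y)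
    (h : x ^ (2 / b) ≤ y) : x ≤ y ^ 2 := by
  calc x = (x ^ (2 / b)) ^ (b / 2) := by
        rw [← Real.rpow_mul hx, div_mul_div_cancel₀ hb.ne', div_self two_ne_zero, Real.rpow_one]
    _ ≤ y ^ (b / 2) := by gcongr
    _ ≤ y ^ (2 : ℝ) := by
        gcongr
        linarith
    _ = y ^ 2 := Real.rpow_two y

lemma exists_rational_approx_of_le_norm_weylSum_one {b : ℝ} (hb : 2 < b) (hb4 : b ≤ 4) :
    ∃ C : ℝ, 1 ≤ C ∧ ∀ (N : ℕ) (α η : ℝ), 1 ≤ N → 0 < η → C ≤ N * η ^ 4 →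
      η * N ≤ ‖weylSum N 1 α‖ →
      ∃ q : ℕ, 1 ≤ q ∧ q * η ^ 2 ≤ C ∧ distInt (q * α) * N ^ 2 * η ^ b ≤ C := by
  set δ : ℝ := 1 - 2 / b with hδdef
  have hb0 : 0 < b := by linarith
  have hδ : 0 < δ := sub_pos.2 ((div_lt_one hb0).2 hb)
  have hδb : 1 - δ = 2 / b := by rw [hδdef]; ring
  have hδ2 : δ ≤ 1 / 2 := by
    have hhalf : 2 / 4 ≤ 2 / b := by gcongr
    linarith
  have hC : (2000 : ℝ) ≤ 2000 / δ := le_div_self (by norm_num) hδ (by linarith)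
  refine ⟨(2000 / δ) ^ 2, by nlinarith, fun N α η hN hη hlarge hsum ↦ ?_⟩
  have hN0 : (0 : ℝ) < N := by exact_mod_cast hN
  obtain ⟨q, S, hq, hS, hSq, hSdist⟩ :=
    exists_denominator_of_le_norm_weylSum_one hN hδ hδ2 hη hlarge hsum
  set X : ℝ := distInt (q * (2 * α)) with hX
  have hX0 : 0 ≤ X := distInt_nonneg _
  have hcast : distInt ((2 * q : ℕ) * α) = X := by
    rw [hX]
    push_cast
    ring_nf
  refine ⟨2 * q, by omega, ?_, ?_⟩
  · have hq24 : q * η ^ 2 ≤ 24 := by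
      refine le_of_mul_le_mul_right ?_ (pow_pos hN0 2)
      calc q * η ^ 2 * N ^ 2 = (η ^ 2 * N ^ 2) * q := by ring
        _ ≤ 4 * S * q := by gcongr
        _ ≤ 24 * (N : ℝ) ^ 2 := by linarith
    push_cast
    nlinarith
  · have hpow : (X * N ^ 2 * η ^ b) ^ (2 / b) ≤ 48 / δ := by
      refine le_of_mul_le_mul_right ?_ (Real.rpow_pos_of_pos hN0 (2 * δ))
      calc (X * N ^ 2 * η ^ b) ^ (2 / b) * (N : ℝ) ^ (2 * δ)
          = η ^ 2 * N ^ 2 * X ^ (1 - δ) := by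
            rw [hδb]
            exact mul_rpow_two_div_mul_rpow hX0 hN0 hη.le hb0.ne'
        _ ≤ 4 * S * X ^ (1 - δ) := by gcongr
        _ ≤ 48 / δ * (N : ℝ) ^ (2 * δ) := by
            rw [mul_assoc, show 48 / δ = 4 * (12 / δ) by ring, mul_assoc]
            gcongr
    rw [hcast]
    refine le_sq_of_rpow_two_div_le (by positivity) hb0 hb4 (by linarith) (hpow.trans ?_)
    gcongr
    norm_num

/-! ### Counting pairs of points with differences near rationals -/

lemma half_le_norm_sum_range_e {L : ℕ} {θ : ℝ} (h : L * distInt θ ≤ 1 / 8) :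
    (L : ℝ) / 2 ≤ ‖∑ l ∈ range L, e (l * θ)‖ := by
  have hre (l : ℕ) (hl : l ∈ range L) : 1 / 2 ≤ (e (l * θ)).re := by
    have hperiod : e (l * θ) = e (l * (θ - round θ)) := by
      rw [e_natCast_mul, e_natCast_mul, e_sub, e_intCast, map_one, mul_one]
    have hlL : (l : ℝ) ≤ L := by exact_mod_cast (mem_range.1 hl).le
    have hangle : |2 * Real.pi * (l * (θ - round θ))| ≤ Real.pi / 3 := by
      rw [abs_mul, abs_mul (l : ℝ), Nat.abs_cast, abs_of_pos Real.two_pi_pos]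
      have hl8 : l * |θ - round θ| ≤ 1 / 8 :=
        (mul_le_mul_of_nonneg_right hlL (abs_nonneg _)).trans h
      nlinarith [Real.pi_pos]
    rw [hperiod, e_apply, mul_comm Complex.I, Complex.exp_ofReal_mul_I_re, ← Real.cos_abs,
      ← Real.cos_pi_div_three]
    exact Real.cos_le_cos_of_nonneg_of_le_pi (abs_nonneg _) (by linarith [Real.pi_pos]) hangle
  calc (L : ℝ) / 2 = ∑ _l ∈ range L, (1 / 2 : ℝ) := by
        rw [sum_const, card_range, nsmul_eq_mul]
        ring
    _ ≤ (∑ l ∈ range L, e (l * θ)).re := by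
        rw [Complex.re_sum]
        exact sum_le_sum hre
    _ ≤ ‖∑ l ∈ range L, e (l * θ)‖ := Complex.re_le_norm _

lemma sum_product_norm_sum_range_e_sq_le (E : Finset ℝ) (q L : ℕ) :
    ∑ p ∈ E ×ˢ E, ‖∑ l ∈ range L, e (l * (q * (p.1 - p.2)))‖ ^ 2 ≤
      2 * L * ∑ h ∈ range L, ‖∑ α ∈ E, e ((q * h : ℕ) * α)‖ ^ 2 := by
  have hvdc (p : ℝ × ℝ) : ‖∑ l ∈ range L, e (l * (q * (p.1 - p.2)))‖ ^ 2 ≤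
      2 * ∑ h ∈ range L, (L - h : ℕ) * (e (h * (q * (p.1 - p.2)))).re := by
    refine (norm_sum_range_sq_le_re L _).trans_eq ?_
    rw [Complex.re_sum]
    congr 1
    refine sum_congr rfl fun h _ ↦ ?_
    simp_rw [← e_sub, ← sub_mul]
    push_cast
    simp_rw [add_sub_cancel_left]
    rw [sum_const, card_range, nsmul_eq_mul, ← Complex.ofReal_natCast, Complex.re_ofReal_mul]
  have hpairs (h : ℕ) : ∑ p ∈ E ×ˢ E, (e (h * (q * (p.1 - p.2)))).re =
      ‖∑ α ∈ E, e ((q * h : ℕ) * α)‖ ^ 2 := by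
    rw [← Complex.ofReal_re (_ ^ 2), norm_sum_sq, ← sum_product', Complex.re_sum]
    refine sum_congr rfl fun p _ ↦ ?_
    rw [← e_sub]
    push_cast
    ring_nf
  calc ∑ p ∈ E ×ˢ E, ‖∑ l ∈ range L, e (l * (q * (p.1 - p.2)))‖ ^ 2
      ≤ ∑ p ∈ E ×ˢ E, 2 * ∑ h ∈ range L, (L - h : ℕ) * (e (h * (q * (p.1 - p.2)))).re :=
        sum_le_sum fun p _ ↦ hvdc p
    _ = 2 * ∑ h ∈ range L, (L - h : ℕ) * ‖∑ α ∈ E, e ((q * h : ℕ) * α)‖ ^ 2 := by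
        rw [← mul_sum, sum_comm]
        simp_rw [← mul_sum, hpairs]
    _ ≤ 2 * ∑ h ∈ range L, L * ‖∑ α ∈ E, e ((q * h : ℕ) * α)‖ ^ 2 := by
        gcongr
        exact Nat.sub_le _ _
    _ = 2 * L * ∑ h ∈ range L, ‖∑ α ∈ E, e ((q * h : ℕ) * α)‖ ^ 2 := by
        rw [← mul_sum, mul_assoc]

lemma card_pairs_mul_distInt_le (E : Finset ℝ) (q : ℕ) {L : ℕ} (hL : 1 ≤ L) :
    (#{p ∈ E ×ˢ E | L * distInt (q * (p.1 - p.2)) ≤ 1 / 8} : ℝ) * L ≤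
      8 * ((#E : ℝ) ^ 2 + ∑ h ∈ Icc 1 L, ‖∑ α ∈ E, e ((q * h : ℕ) * α)‖ ^ 2) := by
  have hL4 : (0 : ℝ) < L / 4 := by positivity
  have hrange : ∑ h ∈ range L, ‖∑ α ∈ E, e ((q * h : ℕ) * α)‖ ^ 2 ≤
      (#E : ℝ) ^ 2 + ∑ h ∈ Icc 1 L, ‖∑ α ∈ E, e ((q * h : ℕ) * α)‖ ^ 2 := by
    rw [range_eq_Ico, sum_eq_sum_Ico_succ_bot hL]
    refine add_le_add (by simp) (sum_le_sum_of_subset_of_nonneg ?_ fun _ _ _ ↦ by positivity)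
    exact Ico_subset_Icc_self
  refine le_of_mul_le_mul_right ?_ hL4
  calc (#{p ∈ E ×ˢ E | L * distInt (q * (p.1 - p.2)) ≤ 1 / 8} : ℝ) * L * (L / 4)
      = ∑ p ∈ E ×ˢ E with L * distInt (q * (p.1 - p.2)) ≤ 1 / 8, ((L : ℝ) / 2) ^ 2 := by
        rw [sum_const, nsmul_eq_mul]
        ring
    _ ≤ ∑ p ∈ E ×ˢ E with L * distInt (q * (p.1 - p.2)) ≤ 1 / 8,
          ‖∑ l ∈ range L, e (l * (q * (p.1 - p.2)))‖ ^ 2 := by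
        gcongr with p hp
        exact half_le_norm_sum_range_e (mem_filter.1 hp).2
    _ ≤ ∑ p ∈ E ×ˢ E, ‖∑ l ∈ range L, e (l * (q * (p.1 - p.2)))‖ ^ 2 :=
        sum_le_sum_of_subset_of_nonneg (filter_subset _ _) fun _ _ _ ↦ by positivity
    _ ≤ 2 * L * ((#E : ℝ) ^ 2 + ∑ h ∈ Icc 1 L, ‖∑ α ∈ E, e ((q * h : ℕ) * α)‖ ^ 2) :=
        (sum_product_norm_sum_range_e_sq_le E q L).trans (by gcongr)
    _ = 8 * ((#E : ℝ) ^ 2 + ∑ h ∈ Icc 1 L, ‖∑ α ∈ E, e ((q * h : ℕ) * α)‖ ^ 2) * (L / 4) := by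
        ring

lemma sum_sum_mul_le_sum_divisorCountLE_mul {F : ℕ → ℝ} (hF : ∀ k, 0 ≤ F k) (Q L : ℕ) :
    ∑ q ∈ Icc 1 Q, ∑ m ∈ Icc 1 L, F (q * m) ≤
      ∑ k ∈ Icc 1 (Q * L), divisorCountLE Q k * F k := by
  have hcount (k : ℕ) : divisorCountLE Q k * F k = ∑ q ∈ Icc 1 Q, if q ∣ k then F k else 0 := by
    rw [← sum_filter, sum_const, nsmul_eq_mul, divisorCountLE]
  simp_rw [hcount]
  rw [sum_comm (s := Icc 1 (Q * L))]
  refine sum_le_sum fun q hq ↦ ?_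
  obtain ⟨hq1, hqQ⟩ := mem_Icc.1 hq
  rw [← sum_filter, sum_Icc_filter_dvd hq1]
  refine sum_le_sum_of_subset_of_nonneg (Icc_subset_Icc_right ?_) fun _ _ _ ↦ hF _
  exact (Nat.le_div_iff_mul_le hq1).2 (by rw [mul_comm]; exact Nat.mul_le_mul_right L hqQ)

lemma mul_le_add_div_pow_mul_pow {d F A Δ : ℝ} (hd : 0 ≤ d) (hF : 0 ≤ F) (hFA : F ≤ A)
    (hΔ : 0 < Δ) (B : ℕ) : d * F ≤ Δ * F + A / Δ ^ B * d ^ (B + 1) := by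
  have hA : 0 ≤ A := hF.trans hFA
  rcases le_total d Δ with h | h
  · have hnonneg : 0 ≤ A / Δ ^ B * d ^ (B + 1) := by positivity
    nlinarith
  · have hd_le : d ≤ d ^ (B + 1) / Δ ^ B := by
      rw [le_div_iff₀ (by positivity), pow_succ, mul_comm]
      gcongr
    calc d * F ≤ d ^ (B + 1) / Δ ^ B * A := by gcongr
      _ = A / Δ ^ B * d ^ (B + 1) := by ring
      _ ≤ Δ * F + A / Δ ^ B * d ^ (B + 1) := le_add_of_nonneg_left (by positivity)

lemma exists_sum_card_pairs_mul_distInt_le (B : ℕ) : ∃ C : ℝ, 1 ≤ C ∧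
    ∀ (M Q L : ℕ) (E : Finset ℝ) (Δ : ℝ), E ⊆ grid M → 1 ≤ L → Q * L < M → 0 < Δ →
      (∑ q ∈ Icc 1 Q, (#{p ∈ E ×ˢ E | L * distInt (q * (p.1 - p.2)) ≤ 1 / 8} : ℝ)) * L ≤
        8 * (Q * (#E : ℝ) ^ 2 + Δ * (M * #E) + (#E : ℝ) ^ 2 / Δ ^ B * (C * (Q * L) * Q)) := by
  obtain ⟨C, hC, hmoment⟩ := exists_sum_divisorCountLE_pow_le B.succ_ne_zero
  refine ⟨C, hC, fun M Q L E Δ hE hL hQL hΔ ↦ ?_⟩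
  set F : ℕ → ℝ := fun k ↦ ‖∑ α ∈ E, e (k * α)‖ ^ 2
  have hF (k : ℕ) : 0 ≤ F k := sq_nonneg _
  have hFE (k : ℕ) : F k ≤ (#E : ℝ) ^ 2 := by
    have hnorm : ‖∑ α ∈ E, e (k * α)‖ ≤ #E := by
      simpa using norm_sum_le_of_le E fun α _ ↦ (norm_e (k * α)).le
    exact pow_le_pow_left₀ (norm_nonneg _) hnorm 2
  have hbessel : ∑ k ∈ Icc 1 (Q * L), F k ≤ M * #E := by
    rw [← sum_range_norm_sum_e_sq (by omega) hE]
    refine sum_le_sum_of_subset_of_nonneg (fun k hk ↦ ?_) fun k _ _ ↦ hF k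
    exact mem_range.2 ((mem_Icc.1 hk).2.trans_lt hQL)
  calc (∑ q ∈ Icc 1 Q, (#{p ∈ E ×ˢ E | L * distInt (q * (p.1 - p.2)) ≤ 1 / 8} : ℝ)) * L
      ≤ ∑ q ∈ Icc 1 Q, 8 * ((#E : ℝ) ^ 2 + ∑ h ∈ Icc 1 L, F (q * h)) := by
        rw [sum_mul]
        exact sum_le_sum fun q _ ↦ card_pairs_mul_distInt_le E q hL
    _ = 8 * (Q * (#E : ℝ) ^ 2 + ∑ q ∈ Icc 1 Q, ∑ h ∈ Icc 1 L, F (q * h)) := by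
        rw [← mul_sum, sum_add_distrib, sum_const, Nat.card_Icc, Nat.add_sub_cancel, nsmul_eq_mul]
    _ ≤ 8 * (Q * (#E : ℝ) ^ 2 + ∑ k ∈ Icc 1 (Q * L),
          (Δ * F k + (#E : ℝ) ^ 2 / Δ ^ B * (divisorCountLE Q k : ℝ) ^ (B + 1))) := by
        gcongr
        refine (sum_sum_mul_le_sum_divisorCountLE_mul hF Q L).trans (sum_le_sum fun k _ ↦ ?_)
        exact mul_le_add_div_pow_mul_pow (Nat.cast_nonneg _) (hF k) (hFE k) hΔ B
    _ ≤ 8 * (Q * (#E : ℝ) ^ 2 + Δ * (M * #E) + (#E : ℝ) ^ 2 / Δ ^ B * (C * (Q * L) * Q)) := by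
        rw [sum_add_distrib, ← mul_sum, ← mul_sum, ← add_assoc]
        gcongr
        exact_mod_cast hmoment Q (Q * L)

lemma exists_nat_inv_le_mul_le {w : ℝ} (hw : 0 < w) (hw8 : 8 * w ≤ 1) :
    ∃ L : ℕ, 1 ≤ L ∧ 8 * (w * L) ≤ 1 ∧ 1 ≤ 16 * (w * L) := by
  have hx : 1 ≤ 1 / (8 * w) := (one_le_div (by positivity)).2 hw8
  have hfloor := Nat.floor_le (zero_le_one.trans hx)
  have hlt := Nat.lt_floor_add_one (1 / (8 * w))
  have hone : (1 : ℝ) ≤ ⌊1 / (8 * w)⌋₊ := by exact_mod_cast (Nat.one_le_floor_iff _).2 hx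
  rw [le_div_iff₀ (by positivity)] at hfloor
  rw [div_lt_iff₀ (by positivity)] at hlt
  exact ⟨_, by exact_mod_cast hone, by linarith, by nlinarith⟩

lemma exists_card_pairs_distInt_le (B : ℕ) : ∃ C : ℝ, 1 ≤ C ∧
    ∀ (M Q : ℕ) (E : Finset ℝ) (w Δ : ℝ), E ⊆ grid M → 0 < w → 8 * w ≤ 1 → Q < 8 * w * M →
      0 < Δ → (#{p ∈ E ×ˢ E | ∃ q ∈ Icc 1 Q, distInt (q * (p.1 - p.2)) ≤ w} : ℝ) ≤
        C * (w * Q * (#E : ℝ) ^ 2 + w * Δ * M * #E + Q ^ 2 * (#E : ℝ) ^ 2 / Δ ^ B) := by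
  obtain ⟨C, hC, hsum⟩ := exists_sum_card_pairs_mul_distInt_le B
  refine ⟨128 * C, by linarith, fun M Q E w Δ hE hw hw8 hQ hΔ ↦ ?_⟩
  obtain ⟨L, hL, hwL, hLw⟩ := exists_nat_inv_le_mul_le hw hw8
  have hL0 : (0 : ℝ) < L := by exact_mod_cast hL
  have hM0 : (0 : ℝ) < M := by
    have := Q.cast_nonneg (α := ℝ)
    exact pos_of_mul_pos_right (this.trans_lt hQ) (by positivity)
  have hQL : Q * L < M := by
    have hreal : (Q : ℝ) * L < M := by
      calc (Q : ℝ) * L < 8 * w * M * L := by gcongr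
        _ = 8 * (w * L) * M := by ring
        _ ≤ 1 * M := by gcongr
        _ = M := one_mul _
    exact_mod_cast hreal
  have hcover : #{p ∈ E ×ˢ E | ∃ q ∈ Icc 1 Q, distInt (q * (p.1 - p.2)) ≤ w} ≤
      ∑ q ∈ Icc 1 Q, #{p ∈ E ×ˢ E | L * distInt (q * (p.1 - p.2)) ≤ 1 / 8} := by
    refine (card_le_card fun p hp ↦ ?_).trans card_biUnion_le
    obtain ⟨hp, q, hq, hdist⟩ := mem_filter.1 hp
    exact mem_biUnion.2 ⟨q, hq, mem_filter.2 ⟨hp, by nlinarith⟩⟩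
  have hcover' : (#{p ∈ E ×ˢ E | ∃ q ∈ Icc 1 Q, distInt (q * (p.1 - p.2)) ≤ w} : ℝ) ≤
      ∑ q ∈ Icc 1 Q, (#{p ∈ E ×ˢ E | L * distInt (q * (p.1 - p.2)) ≤ 1 / 8} : ℝ) := by
    exact_mod_cast hcover
  refine le_of_mul_le_mul_right ?_ hL0
  calc (#{p ∈ E ×ˢ E | ∃ q ∈ Icc 1 Q, distInt (q * (p.1 - p.2)) ≤ w} : ℝ) * L
      ≤ 8 * (1 * (Q * (#E : ℝ) ^ 2 + Δ * (M * #E)) +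
          (#E : ℝ) ^ 2 / Δ ^ B * (C * (Q * L) * Q)) := by
        rw [one_mul]
        exact (mul_le_mul_of_nonneg_right hcover' hL0.le).trans (hsum M Q L E Δ hE hL hQL hΔ)
    _ ≤ 8 * (C * (16 * (w * L)) * (Q * (#E : ℝ) ^ 2 + Δ * (M * #E)) +
          16 * ((#E : ℝ) ^ 2 / Δ ^ B * (C * (Q * L) * Q))) := by
        refine mul_le_mul_of_nonneg_left (add_le_add ?_ ?_) (by norm_num)
        · exact mul_le_mul_of_nonneg_right (one_le_mul_of_one_le_of_one_le hC hLw) (by positivity)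
        · exact le_mul_of_one_le_left (by positivity) (by norm_num)
    _ = 128 * C * (w * Q * (#E : ℝ) ^ 2 + w * Δ * M * #E + Q ^ 2 * (#E : ℝ) ^ 2 / Δ ^ B) * L := by
        ring

lemma eight_mul_div_le_one {A b η : ℝ} {N : ℕ} (hN : 1 ≤ N) (hη : 0 < η) (hη1 : η ≤ 1)
    (hb4 : b ≤ 4) (hA : 8 * A ≤ N * η ^ 4) : 8 * (A / (N ^ 2 * η ^ b)) ≤ 1 := by
  have hN1 : (1 : ℝ) ≤ N := by exact_mod_cast hN
  have hη4b : η ^ 4 ≤ η ^ b := by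
    rw [← Real.rpow_natCast]
    exact Real.rpow_le_rpow_of_exponent_ge hη hη1 (by exact_mod_cast hb4)
  rw [← mul_div_assoc, div_le_one (by positivity)]
  calc 8 * A ≤ N * η ^ 4 := hA
    _ ≤ N ^ 2 * η ^ b := by
      gcongr
      exact le_self_pow₀ hN1 two_ne_zero

lemma div_sq_lt_eight_mul {A b η : ℝ} {N M : ℕ} (hA : 0 < A) (hN : 1 ≤ N) (hNM : N ^ 2 < M)
    (hη : 0 < η) (hη1 : η ≤ 1) (hb : 2 < b) : A / η ^ 2 < 8 * (A / (N ^ 2 * η ^ b)) * M := by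
  have : (0 : ℝ) < N := by exact_mod_cast hN
  have hNM' : (N : ℝ) ^ 2 < M := by exact_mod_cast hNM
  have hηb2 : η ^ b ≤ η ^ 2 := by
    rw [← Real.rpow_natCast]
    exact Real.rpow_le_rpow_of_exponent_ge hη hη1 (by exact_mod_cast hb.le)
  calc A / η ^ 2 ≤ A / η ^ b := by gcongr
    _ < 8 * (A / η ^ b) := by linarith [show 0 < A / η ^ b by positivity]
    _ = 8 * (A / (N ^ 2 * η ^ b)) * N ^ 2 := by field_simp
    _ < 8 * (A / (N ^ 2 * η ^ b)) * M := by gcongr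

lemma exists_card_pairs_le_norm_weylSum_one {b : ℝ} (hb : 2 < b) (hb4 : b ≤ 4) (B : ℕ) :
    ∃ C : ℝ, 1 ≤ C ∧ ∀ (N M : ℕ) (E : Finset ℝ) (η Δ : ℝ), 1 ≤ N → N ^ 2 < M → E ⊆ grid M →
      0 < η → η ≤ 1 → C ≤ N * η ^ 4 → 0 < Δ →
      (#{p ∈ E ×ˢ E | η * N ≤ ‖weylSum N 1 (p.1 - p.2)‖} : ℝ) ≤
        C * ((#E : ℝ) ^ 2 / (η ^ 2 * N ^ 2) + Δ * M * #E / N ^ 2 +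
          (#E : ℝ) ^ 2 / (η ^ 4 * Δ ^ B)) * η ^ (-b) := by
  obtain ⟨A, hA, happrox⟩ := exists_rational_approx_of_le_norm_weylSum_one hb hb4
  obtain ⟨C, hC, hpairs⟩ := exists_card_pairs_distInt_le B
  have hAA : A ≤ A ^ 2 := le_self_pow₀ hA two_ne_zero
  refine ⟨8 * C * A ^ 2, by nlinarith, fun N M E η Δ hN hNM hE hη hη1 hlarge hΔ ↦ ?_⟩
  have hA8 : 8 * A ≤ N * η ^ 4 := le_trans (by nlinarith) hlarge
  set u : ℝ := η ^ b with hu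
  have hu0 : 0 < u := by positivity
  have hu1 : 1 ≤ u⁻¹ := (one_le_inv₀ hu0).2 (Real.rpow_le_one hη.le hη1 (by linarith))
  set Q : ℕ := ⌊A / η ^ 2⌋₊
  have hQ : (Q : ℝ) ≤ A / η ^ 2 := Nat.floor_le (by positivity)
  set w : ℝ := A / (N ^ 2 * u) with hw
  have hw0 : 0 < w := by
    have : (0 : ℝ) < N := by exact_mod_cast hN
    positivity
  have hw8 : 8 * w ≤ 1 := eight_mul_div_le_one hN hη hη1 hb4 hA8
  have hQM : Q < 8 * w * M :=
    hQ.trans_lt (div_sq_lt_eight_mul (by linarith) hN hNM hη hη1 hb)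
  have hsubset : {p ∈ E ×ˢ E | η * N ≤ ‖weylSum N 1 (p.1 - p.2)‖} ⊆
      {p ∈ E ×ˢ E | ∃ q ∈ Icc 1 Q, distInt (q * (p.1 - p.2)) ≤ w} := by
    refine monotone_filter_right _ fun p _ hp ↦ ?_
    obtain ⟨q, hq1, hq, hdist⟩ := happrox N _ η hN hη (by linarith) hp
    refine ⟨q, mem_Icc.2 ⟨hq1, Nat.le_floor ((le_div_iff₀ (by positivity)).2 hq)⟩, ?_⟩
    rw [hw, le_div_iff₀ (by positivity)]
    linarith
  calc (#{p ∈ E ×ˢ E | η * N ≤ ‖weylSum N 1 (p.1 - p.2)‖} : ℝ)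
      ≤ C * (w * Q * (#E : ℝ) ^ 2 + w * Δ * M * #E + Q ^ 2 * (#E : ℝ) ^ 2 / Δ ^ B) :=
        (Nat.cast_le.2 (card_le_card hsubset)).trans (hpairs M Q E w Δ hE hw0 hw8 hQM hΔ)
    _ ≤ C * (w * (A / η ^ 2) * (#E : ℝ) ^ 2 + w * A * Δ * M * #E +
          (A / η ^ 2) ^ 2 * (#E : ℝ) ^ 2 / Δ ^ B * u⁻¹) := by
        gcongr
        · exact le_mul_of_one_le_right hw0.le hA
        · exact (by gcongr : _ ≤ _).trans (le_mul_of_one_le_right (by positivity) hu1)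
    _ = 1 * C * A ^ 2 * ((#E : ℝ) ^ 2 / (η ^ 2 * N ^ 2) + Δ * M * #E / N ^ 2 +
          (#E : ℝ) ^ 2 / (η ^ 4 * Δ ^ B)) * u⁻¹ := by
        rw [hw]
        field_simp
    _ ≤ 8 * C * A ^ 2 * ((#E : ℝ) ^ 2 / (η ^ 2 * N ^ 2) + Δ * M * #E / N ^ 2 +
          (#E : ℝ) ^ 2 / (η ^ 4 * Δ ^ B)) * η ^ (-b) := by
        rw [Real.rpow_neg hη.le, ← hu]
        gcongr
        norm_num

/-! ### Large values of quadratic Weyl sums -/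

lemma half_pow_succ_rpow_neg_mul (a p : ℝ) (k : ℕ) :
    ((1 / 2 : ℝ) ^ (k + 1)) ^ (-a) * ((1 / 2 : ℝ) ^ k) ^ p =
      2 ^ a * ((1 / 2 : ℝ) ^ (p - a)) ^ k := by
  have htwo : (2 : ℝ) ^ a = (1 / 2) ^ (-a) := by
    rw [one_div, Real.inv_rpow zero_le_two, Real.rpow_neg zero_le_two, inv_inv]
  simp_rw [htwo, ← Real.rpow_natCast, ← Real.rpow_mul one_half_pos.le,
    ← Real.rpow_add one_half_pos]
  push_cast
  ring_nf

lemma sum_geometric_le_inv {x : ℝ} (hx0 : 0 ≤ x) (hx1 : x < 1) (S : Finset ℕ) :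
    ∑ k ∈ S, x ^ k ≤ (1 - x)⁻¹ := by
  rw [← tsum_geometric_of_lt_one hx0 hx1]
  exact (summable_geometric_of_lt_one hx0 hx1).sum_le_tsum S fun k _ ↦ by positivity

/- Layer-cake summation over the dyadic levels `2 ^ (-(k + 1)) < s j ≤ 2 ^ (-k)`. -/
lemma sum_rpow_le_of_card_le_rpow {ι : Type*} {J : Finset ι} {s : ι → ℝ} {a p t D : ℝ}
    (hp : 0 < p) (hap : a < p) (ht : 0 < t) (hD : 0 ≤ D) (hs : ∀ j ∈ J, s j ≤ 1)
    (hcard : ∀ η, t ≤ η → η ≤ 1 → (#{j ∈ J | η ≤ s j} : ℝ) ≤ D * η ^ (-a)) :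
    ∑ j ∈ J with 2 * t ≤ s j, s j ^ p ≤ 2 ^ a * (1 - (1 / 2) ^ (p - a))⁻¹ * D := by
  set x : ℝ := (1 / 2) ^ (p - a)
  have hx1 : x < 1 := Real.rpow_lt_one one_half_pos.le one_half_lt_one (sub_pos.2 hap)
  have hlevel : ∀ j ∈ J.filter (2 * t ≤ s ·),
      ∃ k : ℕ, (1 / 2 : ℝ) ^ (k + 1) < s j ∧ s j ≤ (1 / 2) ^ k := fun j hj ↦ by
    obtain ⟨hjJ, hjt⟩ := mem_filter.1 hj
    exact exists_nat_pow_near_of_lt_one (by linarith) (hs j hjJ) one_half_pos one_half_lt_one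
  choose! k hk using hlevel
  have hfiber : ∀ l ∈ (J.filter (2 * t ≤ s ·)).image k,
      ∑ j ∈ J.filter (2 * t ≤ s ·) with k j = l, s j ^ p ≤ D * (2 ^ a * x ^ l) := by
    simp_rw [forall_mem_image]
    intro i hi
    have hti : t ≤ (1 / 2 : ℝ) ^ (k i + 1) := by
      rw [pow_succ]
      linarith [(hk i hi).2, (mem_filter.1 hi).2]
    calc ∑ j ∈ J.filter (2 * t ≤ s ·) with k j = k i, s j ^ p
        ≤ ∑ j ∈ J.filter (2 * t ≤ s ·) with k j = k i, ((1 / 2 : ℝ) ^ k i) ^ p := by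
          refine sum_le_sum fun j hj ↦ ?_
          obtain ⟨hj, hji⟩ := mem_filter.1 hj
          have hsj : 0 ≤ s j := by linarith [(mem_filter.1 hj).2]
          exact Real.rpow_le_rpow hsj (hji ▸ (hk j hj).2) hp.le
      _ ≤ #{j ∈ J | (1 / 2 : ℝ) ^ (k i + 1) ≤ s j} * ((1 / 2 : ℝ) ^ k i) ^ p := by
          rw [sum_const, nsmul_eq_mul]
          gcongr
          intro j hj
          obtain ⟨hj, hji⟩ := mem_filter.1 hj
          exact mem_filter.2 ⟨(mem_filter.1 hj).1, hji ▸ (hk j hj).1.le⟩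
      _ ≤ D * ((1 / 2 : ℝ) ^ (k i + 1)) ^ (-a) * ((1 / 2 : ℝ) ^ k i) ^ p := by
          gcongr
          exact hcard _ hti (pow_le_one₀ one_half_pos.le one_half_lt_one.le)
      _ = D * (2 ^ a * x ^ k i) := by rw [mul_assoc, half_pow_succ_rpow_neg_mul]
  calc ∑ j ∈ J with 2 * t ≤ s j, s j ^ p
      = ∑ l ∈ (J.filter (2 * t ≤ s ·)).image k,
          ∑ j ∈ J.filter (2 * t ≤ s ·) with k j = l, s j ^ p :=
        (sum_fiberwise_of_maps_to (fun j hj ↦ mem_image_of_mem _ hj) _).symm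
    _ ≤ ∑ l ∈ (J.filter (2 * t ≤ s ·)).image k, D * (2 ^ a * x ^ l) := sum_le_sum hfiber
    _ = 2 ^ a * (∑ l ∈ (J.filter (2 * t ≤ s ·)).image k, x ^ l) * D := by
        rw [← mul_sum, ← mul_sum, mul_comm]
    _ ≤ 2 ^ a * (1 - x)⁻¹ * D := by
        gcongr
        exact sum_geometric_le_inv (by positivity) hx1 _

lemma half_rpow_mul_card_le_sum_rpow {ι : Type*} {J : Finset ι} {s : ι → ℝ} {δ p : ℝ}
    (hδ : 0 < δ) (hp : 1 ≤ p) (hsum : δ * #J ≤ ∑ j ∈ J, s j) :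
    (δ / 2) ^ p * #J ≤ ∑ j ∈ J with δ / 2 ≤ s j, s j ^ p := by
  have hsmall : ∑ j ∈ J with ¬ δ / 2 ≤ s j, s j ≤ δ / 2 * #J := by
    calc ∑ j ∈ J with ¬ δ / 2 ≤ s j, s j ≤ ∑ j ∈ J with ¬ δ / 2 ≤ s j, δ / 2 :=
          sum_le_sum fun j hj ↦ (not_le.1 (mem_filter.1 hj).2).le
      _ ≤ ∑ j ∈ J, δ / 2 :=
          sum_le_sum_of_subset_of_nonneg (filter_subset _ _) fun _ _ _ ↦ by positivity
      _ = δ / 2 * #J := by rw [sum_const, nsmul_eq_mul, mul_comm]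
  have hlarge : δ / 2 * #J ≤ ∑ j ∈ J with δ / 2 ≤ s j, s j := by
    rw [← sum_filter_add_sum_filter_not J (δ / 2 ≤ s ·)] at hsum
    linarith
  calc (δ / 2) ^ p * #J = (δ / 2) ^ (p - 1) * (δ / 2 * #J) := by
        rw [← mul_assoc, ← Real.rpow_add_one (by positivity), sub_add_cancel]
    _ ≤ (δ / 2) ^ (p - 1) * ∑ j ∈ J with δ / 2 ≤ s j, s j := by gcongr
    _ ≤ ∑ j ∈ J with δ / 2 ≤ s j, s j ^ p := by
        rw [mul_sum]
        refine sum_le_sum fun j hj ↦ ?_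
        have hj : δ / 2 ≤ s j := (mem_filter.1 hj).2
        have hsj : 0 < s j := by linarith
        calc (δ / 2) ^ (p - 1) * s j ≤ s j ^ (p - 1) * s j := by
              gcongr
          _ = s j ^ p := by rw [← Real.rpow_add_one hsj.ne', sub_add_cancel]

lemma sum_norm_sum_mul_e_sq_le (A : Finset ℤ) (E : Finset ℝ) {u : ℝ → ℂ} (hu : ∀ α, ‖u α‖ ≤ 1) :
    ∑ x ∈ A, ‖∑ α ∈ E, u α * e ((x : ℝ) ^ 2 * α)‖ ^ 2 ≤
      ∑ p ∈ E ×ˢ E, ‖∑ x ∈ A, e ((x : ℝ) ^ 2 * (p.1 - p.2))‖ := by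
  have hexpand : ((∑ x ∈ A, ‖∑ α ∈ E, u α * e ((x : ℝ) ^ 2 * α)‖ ^ 2 : ℝ) : ℂ) =
      ∑ p ∈ E ×ˢ E, u p.1 * (starRingEnd ℂ) (u p.2) *
        ∑ x ∈ A, e ((x : ℝ) ^ 2 * (p.1 - p.2)) := by
    rw [Complex.ofReal_sum]
    simp_rw [norm_sum_sq, mul_sum]
    rw [sum_product, sum_comm]
    refine sum_congr rfl fun α _ ↦ ?_
    rw [sum_comm]
    refine sum_congr rfl fun β _ ↦ sum_congr rfl fun x _ ↦ ?_
    rw [mul_sub, e_sub, map_mul (starRingEnd ℂ)]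
    ring
  calc ∑ x ∈ A, ‖∑ α ∈ E, u α * e ((x : ℝ) ^ 2 * α)‖ ^ 2
      = ‖((∑ x ∈ A, ‖∑ α ∈ E, u α * e ((x : ℝ) ^ 2 * α)‖ ^ 2 : ℝ) : ℂ)‖ := by
        rw [Complex.norm_real, Real.norm_of_nonneg (by positivity)]
    _ ≤ ∑ p ∈ E ×ˢ E, ‖u p.1 * (starRingEnd ℂ) (u p.2) *
          ∑ x ∈ A, e ((x : ℝ) ^ 2 * (p.1 - p.2))‖ := by
        rw [hexpand]
        exact norm_sum_le _ _
    _ ≤ ∑ p ∈ E ×ˢ E, ‖∑ x ∈ A, e ((x : ℝ) ^ 2 * (p.1 - p.2))‖ := by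
        refine sum_le_sum fun p _ ↦ ?_
        rw [norm_mul, norm_mul, RCLike.norm_conj]
        exact mul_le_of_le_one_left (norm_nonneg _)
          (mul_le_one₀ (hu _) (norm_nonneg _) (hu _))

/- Duality removes the unknown coefficients `f`. -/
lemma sum_norm_weylSum_sq_le (N : ℕ) (f : ℤ → ℂ) (E : Finset ℝ) :
    (∑ α ∈ E, ‖weylSum N f α‖) ^ 2 ≤
      (∑ x ∈ Icc (-N : ℤ) N, ‖f x‖ ^ 2) * ∑ p ∈ E ×ˢ E, ‖weylSum N 1 (p.1 - p.2)‖ := by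
  choose u hu hu_mul using fun α ↦ Complex.exists_norm_eq_mul_self (weylSum N f α)
  set W : ℤ → ℂ := fun x ↦ ∑ α ∈ E, u α * e ((x : ℝ) ^ 2 * α)
  have hswap : ((∑ α ∈ E, ‖weylSum N f α‖ : ℝ) : ℂ) = ∑ x ∈ Icc (-N : ℤ) N, f x * W x := by
    rw [Complex.ofReal_sum]
    simp_rw [hu_mul, weylSum, W, mul_sum]
    rw [sum_comm]
    exact sum_congr rfl fun x _ ↦ sum_congr rfl fun α _ ↦ mul_left_comm _ _ _
  have hnorm : ∑ α ∈ E, ‖weylSum N f α‖ ≤ ∑ x ∈ Icc (-N : ℤ) N, ‖f x‖ * ‖W x‖ := by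
    rw [← Real.norm_of_nonneg (sum_nonneg fun α _ ↦ norm_nonneg (weylSum N f α)),
      ← Complex.norm_real, hswap]
    exact norm_sum_le_of_le _ fun x _ ↦ (norm_mul _ _).le
  calc (∑ α ∈ E, ‖weylSum N f α‖) ^ 2 ≤ (∑ x ∈ Icc (-N : ℤ) N, ‖f x‖ * ‖W x‖) ^ 2 := by
        gcongr
    _ ≤ (∑ x ∈ Icc (-N : ℤ) N, ‖f x‖ ^ 2) * ∑ x ∈ Icc (-N : ℤ) N, ‖W x‖ ^ 2 :=
        sum_mul_sq_le_sq_mul_sq _ _ _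
    _ ≤ (∑ x ∈ Icc (-N : ℤ) N, ‖f x‖ ^ 2) * ∑ p ∈ E ×ˢ E, ‖weylSum N 1 (p.1 - p.2)‖ := by
        gcongr
        simpa only [weylSum, Pi.one_apply, one_mul] using
          sum_norm_sum_mul_e_sq_le (Icc (-N : ℤ) N) E fun α ↦ (hu α).le

lemma norm_weylSum_one_div_le_one {N : ℕ} (hN : 1 ≤ N) (α : ℝ) :
    ‖weylSum N 1 α‖ / (3 * N) ≤ 1 := by
  have hN1 : (1 : ℝ) ≤ N := by exact_mod_cast hN
  rw [div_le_one (by positivity)]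
  linarith [norm_weylSum_one_le N α]

lemma sq_div_three_mul_card_product_le {N : ℕ} {f : ℤ → ℂ} {E : Finset ℝ} {η : ℝ} (hN : 1 ≤ N)
    (hf : ∑ x ∈ Icc (-N : ℤ) N, ‖f x‖ ^ 2 ≤ 1) (hη : 0 ≤ η)
    (hE : ∀ α ∈ E, η * √N ≤ ‖weylSum N f α‖) :
    η ^ 2 / 3 * #(E ×ˢ E) ≤ ∑ p ∈ E ×ˢ E, ‖weylSum N 1 (p.1 - p.2)‖ / (3 * N) := by
  have : (0 : ℝ) < N := by exact_mod_cast hN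
  have hdual : (∑ α ∈ E, ‖weylSum N f α‖) ^ 2 ≤ ∑ p ∈ E ×ˢ E, ‖weylSum N 1 (p.1 - p.2)‖ :=
    (sum_norm_weylSum_sq_le N f E).trans (mul_le_of_le_one_left (by positivity) hf)
  have hlower : #E * (η * √N) ≤ ∑ α ∈ E, ‖weylSum N f α‖ := by
    rw [← nsmul_eq_mul]
    exact card_nsmul_le_sum _ _ _ hE
  rw [← sum_div, le_div_iff₀ (by positivity), card_product]
  calc η ^ 2 / 3 * (#E * #E : ℕ) * (3 * N) = (#E * (η * √N)) ^ 2 := by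
        rw [mul_pow, mul_pow, Real.sq_sqrt N.cast_nonneg]
        push_cast
        ring
    _ ≤ (∑ α ∈ E, ‖weylSum N f α‖) ^ 2 := by gcongr
    _ ≤ ∑ p ∈ E ×ˢ E, ‖weylSum N 1 (p.1 - p.2)‖ := hdual

lemma exists_card_pairs_le_norm_weylSum_one_div {b : ℝ} (hb : 2 < b) (hb4 : b ≤ 4) (B : ℕ) :
    ∃ C : ℝ, 1 ≤ C ∧ ∀ (N M : ℕ) (E : Finset ℝ) (t Δ : ℝ), 1 ≤ N → N ^ 2 < M → E ⊆ grid M →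
      0 < t → C ≤ N * t ^ 4 → 0 < Δ → ∀ δ, t ≤ δ → δ ≤ 1 →
      (#{p ∈ E ×ˢ E | δ ≤ ‖weylSum N 1 (p.1 - p.2)‖ / (3 * N)} : ℝ) ≤
        C * ((#E : ℝ) ^ 2 / (t ^ 2 * N ^ 2) + Δ * M * #E / N ^ 2 +
          (#E : ℝ) ^ 2 / (t ^ 4 * Δ ^ B)) * δ ^ (-b) := by
  obtain ⟨C, hC, hpairs⟩ := exists_card_pairs_le_norm_weylSum_one hb hb4 B
  refine ⟨C, hC, fun N M E t Δ hN hNM hE ht hCt hΔ δ hδ hδ1 ↦ ?_⟩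
  have hN0 : (0 : ℝ) < N := by exact_mod_cast hN
  have hδ0 : 0 < δ := ht.trans_le hδ
  calc (#{p ∈ E ×ˢ E | δ ≤ ‖weylSum N 1 (p.1 - p.2)‖ / (3 * N)} : ℝ)
      ≤ #{p ∈ E ×ˢ E | δ * N ≤ ‖weylSum N 1 (p.1 - p.2)‖} := by
        refine Nat.cast_le.2 (card_le_card (monotone_filter_right _ fun p _ hp ↦ ?_))
        rw [le_div_iff₀ (by positivity)] at hp
        nlinarith [mul_pos hδ0 hN0]
    _ ≤ C * ((#E : ℝ) ^ 2 / (δ ^ 2 * N ^ 2) + Δ * M * #E / N ^ 2 +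
          (#E : ℝ) ^ 2 / (δ ^ 4 * Δ ^ B)) * δ ^ (-b) :=
        hpairs N M E δ Δ hN hNM hE hδ0 hδ1 (hCt.trans (by gcongr)) hΔ
    _ ≤ C * ((#E : ℝ) ^ 2 / (t ^ 2 * N ^ 2) + Δ * M * #E / N ^ 2 +
          (#E : ℝ) ^ 2 / (t ^ 4 * Δ ^ B)) * δ ^ (-b) := by gcongr

lemma rescaled_sum_le {d r : ℝ} (η : ℝ) (hd : 0 ≤ d) (hr : 0 ≤ r) (m N : ℕ) :
    (m : ℝ) ^ 2 / ((η ^ 2 / 12) ^ 2 * N ^ 2) + r + (m : ℝ) ^ 2 / ((η ^ 2 / 12) ^ 4 * d) ≤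
      12 ^ 4 * ((m : ℝ) ^ 2 / (η ^ 4 * N ^ 2) + r + (m : ℝ) ^ 2 / (η ^ 8 * d)) := by
  calc (m : ℝ) ^ 2 / ((η ^ 2 / 12) ^ 2 * N ^ 2) + r + (m : ℝ) ^ 2 / ((η ^ 2 / 12) ^ 4 * d)
      = 12 ^ 2 * ((m : ℝ) ^ 2 / (η ^ 4 * N ^ 2)) + 1 * r +
          12 ^ 4 * ((m : ℝ) ^ 2 / (η ^ 8 * d)) := by
        rw [one_mul]
        congr 2 <;> ring
    _ ≤ 12 ^ 4 * ((m : ℝ) ^ 2 / (η ^ 4 * N ^ 2)) + 12 ^ 4 * r +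
          12 ^ 4 * ((m : ℝ) ^ 2 / (η ^ 8 * d)) := by
        have : 0 ≤ (m : ℝ) ^ 2 / (η ^ 8 * d) := by positivity
        gcongr <;> norm_num
    _ = 12 ^ 4 * ((m : ℝ) ^ 2 / (η ^ 4 * N ^ 2) + r + (m : ℝ) ^ 2 / (η ^ 8 * d)) := by ring

lemma rpow_four_add_two_mul_eq {η : ℝ} (hη : 0 ≤ η) (κ : ℝ) :
    η ^ (4 + 2 * κ) = 6 ^ (2 + κ) * (η ^ 2 / 3 / 2) ^ (2 + κ) := by
  rw [← Real.mul_rpow (by norm_num) (by positivity), show 6 * (η ^ 2 / 3 / 2) = η ^ 2 by ring,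
    ← Real.rpow_natCast_mul hη]
  push_cast
  ring_nf

lemma exists_rpow_mul_card_sq_le {κ : ℝ} (hκ : 0 < κ) (hκ1 : κ ≤ 1) (B : ℕ) :
    ∃ C : ℝ, 1 ≤ C ∧ ∀ (N M : ℕ) (f : ℤ → ℂ) (E : Finset ℝ) (η Δ : ℝ), 1 ≤ N → N ^ 2 < M →
      ∑ x ∈ Icc (-N : ℤ) N, ‖f x‖ ^ 2 ≤ 1 → E ⊆ grid M → 0 < η → η ≤ 1 → C ≤ N * η ^ 8 →
      0 < Δ → (∀ α ∈ E, η * √N ≤ ‖weylSum N f α‖) →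
      η ^ (4 + 2 * κ) * (#E : ℝ) ^ 2 ≤ C * ((#E : ℝ) ^ 2 / (η ^ 4 * N ^ 2) +
        Δ * M * #E / N ^ 2 + (#E : ℝ) ^ 2 / (η ^ 8 * Δ ^ B)) := by
  obtain ⟨C, hC, hcard⟩ := exists_card_pairs_le_norm_weylSum_one_div (b := 2 + κ / 2)
    (by linarith) (by linarith) B
  set K : ℝ := 2 ^ (2 + κ / 2) * (1 - (1 / 2) ^ (2 + κ - (2 + κ / 2)))⁻¹
  have hK : 0 ≤ K := mul_nonneg (by positivity) <| inv_nonneg.2 <| sub_nonneg.2 <|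
    Real.rpow_le_one one_half_pos.le one_half_lt_one.le (by linarith)
  have hC_le : C ≤ C * (1 + 6 ^ (2 + κ) * K) :=
    le_mul_of_one_le_right (by linarith) (le_add_of_nonneg_right (by positivity))
  refine ⟨12 ^ 4 * (C * (1 + 6 ^ (2 + κ) * K)), by linarith,
    fun N M f E η Δ hN hNM hf hE hη hη1 hCN hΔ hlarge ↦ ?_⟩
  have hupper := sum_rpow_le_of_card_le_rpow (p := 2 + κ) (by linarith) (by linarith)
    (by positivity) (by positivity) (fun p _ ↦ norm_weylSum_one_div_le_one hN (p.1 - p.2))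
    (hcard N M E (η ^ 2 / 12) Δ hN hNM hE (by positivity) (by linarith) hΔ)
  have hlower := half_rpow_mul_card_le_sum_rpow (δ := η ^ 2 / 3) (p := 2 + κ) (by positivity)
    (by linarith) (sq_div_three_mul_card_product_le hN hf hη.le hlarge)
  rw [show 2 * (η ^ 2 / 12) = η ^ 2 / 3 / 2 by ring] at hupper
  calc η ^ (4 + 2 * κ) * (#E : ℝ) ^ 2
      = 6 ^ (2 + κ) * ((η ^ 2 / 3 / 2) ^ (2 + κ) * #(E ×ˢ E)) := by
        rw [rpow_four_add_two_mul_eq hη.le, card_product, Nat.cast_mul, sq (#E : ℝ), mul_assoc]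
    _ ≤ 6 ^ (2 + κ) * (K * (C * (12 ^ 4 * ((#E : ℝ) ^ 2 / (η ^ 4 * N ^ 2) +
          Δ * M * #E / N ^ 2 + (#E : ℝ) ^ 2 / (η ^ 8 * Δ ^ B))))) := by
        refine mul_le_mul_of_nonneg_left ((hlower.trans hupper).trans ?_) (by positivity)
        gcongr
        exact rescaled_sum_le η (by positivity) (by positivity) _ _
    _ = 12 ^ 4 * (C * (0 + 6 ^ (2 + κ) * K)) * ((#E : ℝ) ^ 2 / (η ^ 4 * N ^ 2) +
          Δ * M * #E / N ^ 2 + (#E : ℝ) ^ 2 / (η ^ 8 * Δ ^ B)) := by ring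
    _ ≤ 12 ^ 4 * (C * (1 + 6 ^ (2 + κ) * K)) * ((#E : ℝ) ^ 2 / (η ^ 4 * N ^ 2) +
          Δ * M * #E / N ^ 2 + (#E : ℝ) ^ 2 / (η ^ 8 * Δ ^ B)) := by
        gcongr
        exact zero_le_one

lemma mul_div_le_of_four_mul_le {C d x y : ℝ} (hd : 0 < d) (hy : 0 ≤ y) (h : 4 * C ≤ x * d) :
    C * (y / d) ≤ x * y / 4 := by
  rw [← mul_div_assoc, div_le_div_iff₀ hd four_pos]
  linarith [mul_le_mul_of_nonneg_right h hy]

lemma four_mul_le_rpow_mul_pow_mul_sq {C κ η : ℝ} {N : ℕ} (hC : 1 ≤ C) (hη : 0 < η) (hη1 : η ≤ 1)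
    (hκ1 : κ ≤ 1) (hCN : 4 * C ≤ N * η ^ 8) :
    4 * C ≤ η ^ (4 + 2 * κ) * (η ^ 4 * N ^ 2) := by
  have hη12 : η ^ 12 ≤ η ^ (4 + 2 * κ) := by
    rw [← Real.rpow_natCast]
    exact Real.rpow_le_rpow_of_exponent_ge hη hη1 (by norm_num; linarith)
  calc 4 * C ≤ (4 * C) ^ 2 := le_self_pow₀ (by linarith) two_ne_zero
    _ ≤ (N * η ^ 8) ^ 2 := by gcongr
    _ = η ^ 12 * (η ^ 4 * N ^ 2) := by ring
    _ ≤ η ^ (4 + 2 * κ) * (η ^ 4 * N ^ 2) := by gcongr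

lemma four_mul_le_rpow_mul_pow_mul_pow {C κ η : ℝ} {B : ℕ} (hC : 1 ≤ C) (hη : 0 < η)
    (hη1 : η ≤ 1) (hκ1 : κ ≤ 1) (hB : 14 ≤ κ * B) :
    4 * C ≤ η ^ (4 + 2 * κ) * (η ^ 8 * (4 * C * η ^ (-κ)) ^ B) := by
  have hB0 : B ≠ 0 := by
    rintro rfl
    norm_num at hB
  calc 4 * C ≤ (4 * C) ^ B := le_self_pow₀ (by linarith) hB0
    _ ≤ η ^ (4 + 2 * κ + 8 - κ * B) * (4 * C) ^ B :=
        le_mul_of_one_le_left (by positivity)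
          (Real.one_le_rpow_of_pos_of_le_one_of_nonpos hη hη1 (by linarith))
    _ = η ^ (4 + 2 * κ) * (η ^ 8 * (4 * C * η ^ (-κ)) ^ B) := by
        rw [Real.rpow_neg hη.le, mul_pow (4 * C), inv_pow, ← Real.rpow_mul_natCast hη.le,
          Real.rpow_sub hη, Real.rpow_add hη,
          show η ^ (8 : ℝ) = η ^ 8 by exact_mod_cast Real.rpow_natCast η 8]
        ring

/- The choice `Δ = 4 * C * η ^ (-κ)` makes the outer two of the three terms negligible. -/
lemma mul_sq_mul_rpow_le_of_rpow_mul_sq_le {C κ η m M : ℝ} {N B : ℕ} (hC : 1 ≤ C) (hη : 0 < η)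
    (hη1 : η ≤ 1) (hm : 0 ≤ m) (hM : 0 ≤ M) (hN : 1 ≤ N) (hκ1 : κ ≤ 1) (hB : 14 ≤ κ * B)
    (hCN : 4 * C ≤ N * η ^ 8)
    (h : η ^ (4 + 2 * κ) * m ^ 2 ≤ C * (m ^ 2 / (η ^ 4 * N ^ 2) +
      4 * C * η ^ (-κ) * M * m / N ^ 2 + m ^ 2 / (η ^ 8 * (4 * C * η ^ (-κ)) ^ B))) :
    m * N ^ 2 * η ^ (4 + 3 * κ) ≤ 8 * C ^ 2 * M := by
  have : (0 : ℝ) < N := by exact_mod_cast hN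
  have hfirst : C * (m ^ 2 / (η ^ 4 * N ^ 2)) ≤ η ^ (4 + 2 * κ) * m ^ 2 / 4 :=
    mul_div_le_of_four_mul_le (by positivity) (sq_nonneg m)
      (four_mul_le_rpow_mul_pow_mul_sq hC hη hη1 hκ1 hCN)
  have hlast : C * (m ^ 2 / (η ^ 8 * (4 * C * η ^ (-κ)) ^ B)) ≤ η ^ (4 + 2 * κ) * m ^ 2 / 4 :=
    mul_div_le_of_four_mul_le (by positivity) (sq_nonneg m)
      (four_mul_le_rpow_mul_pow_mul_pow hC hη hη1 hκ1 hB)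
  have hmiddle : η ^ (4 + 2 * κ) * m ^ 2 ≤ 8 * C ^ 2 * M * η ^ (-κ) * m / N ^ 2 := by
    calc η ^ (4 + 2 * κ) * m ^ 2 ≤ 2 * (C * (4 * C * η ^ (-κ) * M * m / N ^ 2)) := by linarith
      _ = 8 * C ^ 2 * M * η ^ (-κ) * m / N ^ 2 := by ring
  rcases hm.eq_or_lt with rfl | hm0
  · simp only [zero_mul]
    positivity
  refine le_of_mul_le_mul_right ?_ (show 0 < η ^ (-κ) * m / N ^ 2 by positivity)
  calc m * N ^ 2 * η ^ (4 + 3 * κ) * (η ^ (-κ) * m / N ^ 2)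
      = η ^ (4 + 3 * κ) * η ^ (-κ) * m ^ 2 := by field_simp
    _ = η ^ (4 + 2 * κ) * m ^ 2 := by
        rw [← Real.rpow_add hη]
        ring_nf
    _ ≤ 8 * C ^ 2 * M * η ^ (-κ) * m / N ^ 2 := hmiddle
    _ = 8 * C ^ 2 * M * (η ^ (-κ) * m / N ^ 2) := by ring

theorem exists_card_mul_rpow_le_of_le_norm_weylSum {κ : ℝ} (hκ : 0 < κ) (hκ1 : κ ≤ 1) :
    ∃ C : ℝ, 1 ≤ C ∧ ∀ (N M : ℕ) (f : ℤ → ℂ) (E : Finset ℝ) (η : ℝ), 1 ≤ N → N ^ 2 < M →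
      ∑ x ∈ Icc (-N : ℤ) N, ‖f x‖ ^ 2 ≤ 1 → E ⊆ grid M → 0 < η → η ≤ 1 → C ≤ N * η ^ 8 →
      (∀ α ∈ E, η * √N ≤ ‖weylSum N f α‖) → #E * N ^ 2 * η ^ (4 + 3 * κ) ≤ C * M := by
  set B : ℕ := ⌈14 / κ⌉₊
  have hB : 14 ≤ κ * B := (div_le_iff₀' hκ).1 (Nat.le_ceil _)
  obtain ⟨C, hC, hcard⟩ := exists_rpow_mul_card_sq_le hκ hκ1 B
  have hCC : C ≤ C ^ 2 := le_self_pow₀ hC two_ne_zero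
  refine ⟨8 * C ^ 2, by linarith, fun N M f E η hN hNM hf hE hη hη1 hCN hlarge ↦ ?_⟩
  refine mul_sq_mul_rpow_le_of_rpow_mul_sq_le hC hη hη1 (Nat.cast_nonneg _) (Nat.cast_nonneg _)
    hN hκ1 hB (by linarith) ?_
  exact hcard N M f E η _ hN hNM hf hE hη hη1 (by linarith) (by positivity) hlarge

/-! ### Moments of quadratic Weyl sums -/

lemma card_filter_sq_sub_sq_eq_le (S : Finset (ℤ × ℤ)) {m : ℤ} (hm : m ≠ 0) :
    #{p ∈ S | p.1 ^ 2 - p.2 ^ 2 = m} ≤ 2 * #m.natAbs.divisors := by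
  have hcard : #(m.natAbs.divisors ×ˢ (univ : Finset Bool)) = 2 * #m.natAbs.divisors := by
    rw [card_product, card_univ, Fintype.card_bool, mul_comm]
  rw [← hcard]
  refine card_le_card_of_injOn (fun p ↦ ((p.1 - p.2).natAbs, decide (0 ≤ p.1 - p.2))) ?_ ?_
  · intro p hp
    have hdvd : p.1 - p.2 ∣ m := ⟨p.1 + p.2, by rw [← (mem_filter.1 hp).2]; ring⟩
    exact mem_product.2 ⟨Nat.mem_divisors.2 ⟨Int.natAbs_dvd_natAbs.2 hdvd, by omega⟩, mem_univ _⟩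
  · intro p hp q hq hpq
    have hpm : p.1 ^ 2 - p.2 ^ 2 = m := (mem_filter.1 hp).2
    have hqm : q.1 ^ 2 - q.2 ^ 2 = m := (mem_filter.1 hq).2
    simp only [Prod.mk.injEq, decide_eq_decide] at hpq
    have hsub : p.1 - p.2 = q.1 - q.2 := by omega
    have hne : p.1 - p.2 ≠ 0 := fun h ↦ hm (by linear_combination (p.1 + p.2) * h - hpm)
    have hadd : p.1 + p.2 = q.1 + q.2 := by
      refine mul_left_cancel₀ hne ?_
      linear_combination hpm - hqm - (q.1 + q.2) * hsub
    ext <;> omega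

lemma sum_norm_mul_norm_of_sq_eq_sq_le (N : ℕ) (f : ℤ → ℂ) :
    ∑ p ∈ Icc (-N : ℤ) N ×ˢ Icc (-N : ℤ) N with p.1 ^ 2 - p.2 ^ 2 = 0, ‖f p.1‖ * ‖f p.2‖ ≤
      2 * ∑ x ∈ Icc (-N : ℤ) N, ‖f x‖ ^ 2 := by
  set I := Icc (-N : ℤ) N with hI
  have hsub : {p ∈ I ×ˢ I | p.1 ^ 2 - p.2 ^ 2 = 0} ⊆
      I.image (fun x ↦ (x, x)) ∪ I.image (fun x ↦ (x, -x)) := by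
    rintro ⟨x, y⟩ hp
    obtain ⟨hxy, hsq⟩ := mem_filter.1 hp
    have hx : x ∈ I := (mem_product.1 hxy).1
    rcases sq_eq_sq_iff_eq_or_eq_neg.1 (sub_eq_zero.1 hsq).symm with h | h
    · exact mem_union_left _ (mem_image.2 ⟨x, hx, Prod.ext rfl h.symm⟩)
    · exact mem_union_right _ (mem_image.2 ⟨x, hx, Prod.ext rfl h.symm⟩)
  have hneg : ∑ x ∈ I, ‖f (-x)‖ ^ 2 = ∑ x ∈ I, ‖f x‖ ^ 2 := by
    refine sum_nbij' Neg.neg Neg.neg ?_ ?_ ?_ ?_ ?_ <;> intro x hx <;>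
      simp only [hI, mem_Icc, neg_neg] at * <;> omega
  calc ∑ p ∈ I ×ˢ I with p.1 ^ 2 - p.2 ^ 2 = 0, ‖f p.1‖ * ‖f p.2‖
      ≤ ∑ p ∈ I.image (fun x ↦ (x, x)) ∪ I.image (fun x ↦ (x, -x)), ‖f p.1‖ * ‖f p.2‖ :=
        sum_le_sum_of_subset_of_nonneg hsub fun _ _ _ ↦ by positivity
    _ ≤ ∑ p ∈ I.image (fun x ↦ (x, x)), ‖f p.1‖ * ‖f p.2‖ +
          ∑ p ∈ I.image (fun x ↦ (x, -x)), ‖f p.1‖ * ‖f p.2‖ := by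
        rw [← sum_union_inter]
        exact le_add_of_nonneg_right (by positivity)
    _ = ∑ x ∈ I, ‖f x‖ ^ 2 + ∑ x ∈ I, ‖f x‖ * ‖f (-x)‖ := by
        rw [sum_image fun x _ y _ h ↦ (Prod.ext_iff.1 h).1,
          sum_image fun x _ y _ h ↦ (Prod.ext_iff.1 h).1]
        simp_rw [sq]
    _ ≤ ∑ x ∈ I, ‖f x‖ ^ 2 + ∑ x ∈ I, (‖f x‖ ^ 2 + ‖f (-x)‖ ^ 2) / 2 := by
        gcongr with x
        linarith [two_mul_le_add_sq ‖f x‖ ‖f (-x)‖]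
    _ = 2 * ∑ x ∈ I, ‖f x‖ ^ 2 := by
        rw [← sum_div, sum_add_distrib, hneg]
        ring

/-- The coefficient of `e (m * α)` in the expansion of `‖weylSum N f α‖ ^ 2`. -/
def weylSqCoeff (N : ℕ) (f : ℤ → ℂ) (m : ℤ) : ℂ :=
  ∑ p ∈ Icc (-N : ℤ) N ×ˢ Icc (-N : ℤ) N with p.1 ^ 2 - p.2 ^ 2 = m,
    f p.1 * (starRingEnd ℂ) (f p.2)

lemma sq_sub_sq_mem_Icc {N : ℕ} {p : ℤ × ℤ} (hp : p ∈ Icc (-N : ℤ) N ×ˢ Icc (-N : ℤ) N) :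
    p.1 ^ 2 - p.2 ^ 2 ∈ Icc (-(N : ℤ) ^ 2) ((N : ℤ) ^ 2) := by
  obtain ⟨h1, h2⟩ := mem_product.1 hp
  rw [mem_Icc] at h1 h2 ⊢
  have := sq_le_sq' h1.1 h1.2
  have := sq_le_sq' h2.1 h2.2
  constructor <;> linarith [sq_nonneg p.1, sq_nonneg p.2]

lemma norm_weylSum_sq_eq (N : ℕ) (f : ℤ → ℂ) (α : ℝ) :
    ((‖weylSum N f α‖ ^ 2 : ℝ) : ℂ) =
      ∑ m ∈ Icc (-(N : ℤ) ^ 2) ((N : ℤ) ^ 2), weylSqCoeff N f m * e (m * α) := by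
  rw [weylSum, norm_sum_sq, ← sum_product',
    ← sum_fiberwise_of_maps_to (fun p hp ↦ sq_sub_sq_mem_Icc hp)]
  refine sum_congr rfl fun m _ ↦ ?_
  rw [weylSqCoeff, sum_mul]
  refine sum_congr rfl fun p hp ↦ ?_
  rw [← (mem_filter.1 hp).2, map_mul (starRingEnd ℂ)]
  push_cast
  rw [sub_mul, e_sub]
  ring

lemma sum_grid_norm_weylSum_pow_four_eq {N M : ℕ} (hNM : 2 * N ^ 2 < M) (f : ℤ → ℂ) :
    ∑ α ∈ grid M, ‖weylSum N f α‖ ^ 4 =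
      M * ∑ m ∈ Icc (-(N : ℤ) ^ 2) ((N : ℤ) ^ 2), ‖weylSqCoeff N f m‖ ^ 2 := by
  have hinj : ∀ a ∈ Icc (-(N : ℤ) ^ 2) ((N : ℤ) ^ 2), ∀ b ∈ Icc (-(N : ℤ) ^ 2) ((N : ℤ) ^ 2),
      (M : ℤ) ∣ a - b → a = b := fun a ha b hb hab ↦ by
    rw [mem_Icc] at ha hb
    zify at hNM
    exact sub_eq_zero.1 (Int.eq_zero_of_abs_lt_dvd hab (abs_lt.2 ⟨by linarith, by linarith⟩))
  rw [← sum_grid_norm_sum_sq (by omega) hinj]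
  refine sum_congr rfl fun α _ ↦ ?_
  rw [← norm_weylSum_sq_eq, Complex.norm_real, norm_pow, norm_norm, ← pow_mul]

lemma norm_weylSqCoeff_le (N : ℕ) (f : ℤ → ℂ) (m : ℤ) :
    ‖weylSqCoeff N f m‖ ≤
      ∑ p ∈ Icc (-N : ℤ) N ×ˢ Icc (-N : ℤ) N with p.1 ^ 2 - p.2 ^ 2 = m, ‖f p.1‖ * ‖f p.2‖ :=
  norm_sum_le_of_le _ fun p _ ↦ by rw [norm_mul, RCLike.norm_conj]

lemma norm_weylSqCoeff_sq_le (N : ℕ) (f : ℤ → ℂ) {m : ℤ} (hm : m ≠ 0) :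
    ‖weylSqCoeff N f m‖ ^ 2 ≤ 2 * #m.natAbs.divisors *
      ∑ p ∈ Icc (-N : ℤ) N ×ˢ Icc (-N : ℤ) N with p.1 ^ 2 - p.2 ^ 2 = m,
        ‖f p.1‖ ^ 2 * ‖f p.2‖ ^ 2 := by
  simp_rw [← mul_pow]
  calc ‖weylSqCoeff N f m‖ ^ 2
      ≤ (∑ p ∈ Icc (-N : ℤ) N ×ˢ Icc (-N : ℤ) N with p.1 ^ 2 - p.2 ^ 2 = m,
          ‖f p.1‖ * ‖f p.2‖) ^ 2 := by
        gcongr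
        exact norm_weylSqCoeff_le N f m
    _ ≤ _ := sq_sum_le_card_mul_sum_sq
    _ ≤ _ := by
        gcongr
        exact_mod_cast card_filter_sq_sub_sq_eq_le _ hm

lemma sum_sum_sq_sub_sq_eq (N : ℕ) (f : ℤ → ℂ) :
    ∑ m ∈ Icc (-(N : ℤ) ^ 2) ((N : ℤ) ^ 2),
      ∑ p ∈ Icc (-N : ℤ) N ×ˢ Icc (-N : ℤ) N with p.1 ^ 2 - p.2 ^ 2 = m,
        ‖f p.1‖ ^ 2 * ‖f p.2‖ ^ 2 = (∑ x ∈ Icc (-N : ℤ) N, ‖f x‖ ^ 2) ^ 2 := by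
  rw [sum_fiberwise_of_maps_to fun p hp ↦ sq_sub_sq_mem_Icc hp, sum_product, sq,
    sum_mul_sum]

lemma sum_norm_weylSqCoeff_sq_le (N : ℕ) (f : ℤ → ℂ) {K : ℝ} (hK : 0 ≤ K)
    (hdiv : ∀ m ∈ Icc (-(N : ℤ) ^ 2) ((N : ℤ) ^ 2), m ≠ 0 → 2 * (#m.natAbs.divisors : ℝ) ≤ K) :
    ∑ m ∈ Icc (-(N : ℤ) ^ 2) ((N : ℤ) ^ 2), ‖weylSqCoeff N f m‖ ^ 2 ≤
      (4 + K) * (∑ x ∈ Icc (-N : ℤ) N, ‖f x‖ ^ 2) ^ 2 := by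
  set Q := ∑ x ∈ Icc (-N : ℤ) N, ‖f x‖ ^ 2
  have hcoeff (m : ℤ) (hm : m ∈ Icc (-(N : ℤ) ^ 2) ((N : ℤ) ^ 2)) :
      ‖weylSqCoeff N f m‖ ^ 2 ≤ (if m = 0 then (2 * Q) ^ 2 else 0) +
        K * ∑ p ∈ Icc (-N : ℤ) N ×ˢ Icc (-N : ℤ) N with p.1 ^ 2 - p.2 ^ 2 = m,
          ‖f p.1‖ ^ 2 * ‖f p.2‖ ^ 2 := by
    split_ifs with hm0
    · subst hm0
      grw [norm_weylSqCoeff_le, sum_norm_mul_norm_of_sq_eq_sq_le]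
      exact le_add_of_nonneg_right (by positivity)
    · rw [zero_add]
      grw [norm_weylSqCoeff_sq_le N f hm0, hdiv m hm hm0]
  calc ∑ m ∈ Icc (-(N : ℤ) ^ 2) ((N : ℤ) ^ 2), ‖weylSqCoeff N f m‖ ^ 2
      ≤ (2 * Q) ^ 2 + K * Q ^ 2 := by
        grw [sum_le_sum hcoeff]
        rw [sum_add_distrib, ← mul_sum, sum_sum_sq_sub_sq_eq, sum_ite_eq', if_pos (by simp)]
    _ = (4 + K) * Q ^ 2 := by ring

lemma exists_sum_norm_weylSum_pow_four_le {ε : ℝ} (hε : 0 < ε) :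
    ∃ C : ℝ, 1 ≤ C ∧ ∀ (N M : ℕ) (f : ℤ → ℂ), 1 ≤ N → 2 * N ^ 2 < M →
      ∑ α ∈ grid M, ‖weylSum N f α‖ ^ 4 ≤
        C * M * (N : ℝ) ^ ε * (∑ x ∈ Icc (-N : ℤ) N, ‖f x‖ ^ 2) ^ 2 := by
  obtain ⟨C, hC, hdiv⟩ := exists_card_divisors_le_rpow (half_pos hε)
  refine ⟨4 + 2 * C, by linarith, fun N M f hN hNM ↦ ?_⟩
  have hNε : 1 ≤ (N : ℝ) ^ ε := Real.one_le_rpow (by exact_mod_cast hN) hε.le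
  have hdivN (m : ℤ) (hm : m ∈ Icc (-(N : ℤ) ^ 2) ((N : ℤ) ^ 2)) (hm0 : m ≠ 0) :
      2 * (#m.natAbs.divisors : ℝ) ≤ 2 * C * (N : ℝ) ^ ε := by
    have hmN : (m.natAbs : ℝ) ≤ (N : ℝ) ^ 2 := by
      have : m.natAbs ≤ N ^ 2 := by zify; exact abs_le.2 (mem_Icc.1 hm)
      exact_mod_cast this
    calc 2 * (#m.natAbs.divisors : ℝ) ≤ 2 * (C * ((N : ℝ) ^ 2) ^ (ε / 2)) := by
          grw [hdiv _ (by omega), hmN]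
      _ = 2 * C * (N : ℝ) ^ ε := by
          rw [← Real.rpow_natCast_mul N.cast_nonneg, Nat.cast_two, mul_div_cancel₀ _ two_ne_zero,
            mul_assoc]
  rw [sum_grid_norm_weylSum_pow_four_eq hNM]
  grw [sum_norm_weylSqCoeff_sq_le N f (by positivity) hdivN]
  rw [← mul_assoc, mul_right_comm _ (M : ℝ), mul_comm (M : ℝ)]
  gcongr
  linarith

lemma norm_weylSum_sq_le (N : ℕ) (f : ℤ → ℂ) (α : ℝ) :
    ‖weylSum N f α‖ ^ 2 ≤ (2 * N + 1) * ∑ x ∈ Icc (-N : ℤ) N, ‖f x‖ ^ 2 := by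
  have hcard : (#(Icc (-N : ℤ) N) : ℝ) = 2 * N + 1 := by
    rw [Int.card_Icc]
    have : ((N : ℤ) + 1 - -N).toNat = 2 * N + 1 := by omega
    rw [this]
    push_cast
    rfl
  have hnorm : ‖weylSum N f α‖ ≤ ∑ x ∈ Icc (-N : ℤ) N, ‖f x‖ :=
    norm_sum_le_of_le _ fun x _ ↦ by rw [norm_mul, norm_e, mul_one]
  rw [← hcard]
  calc ‖weylSum N f α‖ ^ 2 ≤ (∑ x ∈ Icc (-N : ℤ) N, ‖f x‖) ^ 2 := by gcongr
    _ ≤ _ := sq_sum_le_card_mul_sum_sq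

lemma norm_weylSum_le_two_mul_sqrt {N : ℕ} (hN : 1 ≤ N) {f : ℤ → ℂ}
    (hf : ∑ x ∈ Icc (-N : ℤ) N, ‖f x‖ ^ 2 ≤ 1) (α : ℝ) : ‖weylSum N f α‖ ≤ 2 * √N := by
  have hN1 : (1 : ℝ) ≤ N := by exact_mod_cast hN
  refine le_of_sq_le_sq ?_ (by positivity)
  calc ‖weylSum N f α‖ ^ 2 ≤ (2 * N + 1) * 1 := by grw [norm_weylSum_sq_le N f α, hf]
    _ ≤ (2 * √N) ^ 2 := by
        rw [mul_pow, Real.sq_sqrt N.cast_nonneg]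
        linarith

lemma sum_filter_not_le_rpow_le {ι : Type*} (J : Finset ι) {s : ι → ℝ} {p q T : ℝ} (hq : 0 ≤ q)
    (hqp : q ≤ p) (hs : ∀ j, 0 ≤ s j) (hT : 0 ≤ T) :
    ∑ j ∈ J with ¬ T ≤ s j, s j ^ p ≤ T ^ (p - q) * ∑ j ∈ J, s j ^ q := by
  calc ∑ j ∈ J with ¬ T ≤ s j, s j ^ p ≤ ∑ j ∈ J with ¬ T ≤ s j, T ^ (p - q) * s j ^ q := by
        refine sum_le_sum fun j hj ↦ ?_
        calc s j ^ p = s j ^ (p - q) * s j ^ q := by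
              rw [← Real.rpow_add_of_nonneg (hs j) (sub_nonneg.2 hqp) hq, sub_add_cancel]
          _ ≤ T ^ (p - q) * s j ^ q := by
              have := hs j
              gcongr
              exact (not_le.1 (mem_filter.1 hj).2).le
    _ ≤ ∑ j ∈ J, T ^ (p - q) * s j ^ q :=
        sum_le_sum_of_subset_of_nonneg (filter_subset _ _) fun j _ _ ↦
          mul_nonneg (by positivity) (Real.rpow_nonneg (hs j) _)
    _ = T ^ (p - q) * ∑ j ∈ J, s j ^ q := (mul_sum _ _ _).symm

lemma exists_card_filter_le_norm_weylSum_div_le {κ : ℝ} (hκ : 0 < κ) (hκ1 : κ ≤ 1) :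
    ∃ C : ℝ, 1 ≤ C ∧ ∀ (N M : ℕ) (f : ℤ → ℂ) (η : ℝ), 1 ≤ N → N ^ 2 < M →
      ∑ x ∈ Icc (-N : ℤ) N, ‖f x‖ ^ 2 ≤ 1 → 0 < η → η ≤ 1 → C ≤ N * η ^ 8 →
      (#{α ∈ grid M | η ≤ ‖weylSum N f α‖ / (2 * √N)} : ℝ) ≤
        C * M / N ^ 2 * η ^ (-(4 + 3 * κ)) := by
  obtain ⟨C, hC, hlarge⟩ := exists_card_mul_rpow_le_of_le_norm_weylSum hκ hκ1
  refine ⟨C, hC, fun N M f η hN hNM hf hη hη1 hCη ↦ ?_⟩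
  have hsqrt : 0 < √(N : ℝ) := Real.sqrt_pos.2 (by exact_mod_cast hN)
  have hE (α : ℝ) (hα : α ∈ {α ∈ grid M | η ≤ ‖weylSum N f α‖ / (2 * √N)}) :
      η * √N ≤ ‖weylSum N f α‖ := by
    have := (le_div_iff₀ (by positivity)).1 (mem_filter.1 hα).2
    linarith [mul_pos hη hsqrt]
  have := hlarge N M f _ η hN hNM hf (filter_subset _ _) hη hη1 hCη hE
  rw [Real.rpow_neg hη.le, ← div_eq_mul_inv, le_div_iff₀ (by positivity),
    le_div_iff₀ (by positivity)]
  linarith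

lemma exists_sum_filter_le_norm_weylSum_rpow_le {p : ℝ} (hp : 4 < p) :
    ∃ B C : ℝ, 1 ≤ B ∧ 0 ≤ C ∧ ∀ (N M : ℕ) (f : ℤ → ℂ) (t : ℝ), 1 ≤ N → N ^ 2 < M →
      ∑ x ∈ Icc (-N : ℤ) N, ‖f x‖ ^ 2 ≤ 1 → 0 < t → B ≤ N * t ^ 8 →
      ∑ α ∈ grid M with 4 * t * √N ≤ ‖weylSum N f α‖, ‖weylSum N f α‖ ^ p ≤
        C * M * (N : ℝ) ^ (p / 2 - 2) := by
  set κ : ℝ := min 1 ((p - 4) / 6)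
  have hκ : 0 < κ := lt_min one_pos (by linarith)
  have hκp : 4 + 3 * κ < p := by linarith [min_le_right 1 ((p - 4) / 6)]
  obtain ⟨B, hB, hcard⟩ := exists_card_filter_le_norm_weylSum_div_le hκ (min_le_left _ _)
  set K : ℝ := 2 ^ (4 + 3 * κ) * (1 - (1 / 2) ^ (p - (4 + 3 * κ)))⁻¹
  have hK : 0 ≤ K := mul_nonneg (by positivity) (inv_nonneg.2 (sub_nonneg.2
    (Real.rpow_le_one (by norm_num) (by norm_num) (by linarith))))
  refine ⟨B, 2 ^ p * K * B, hB, by positivity, fun N M f t hN hNM hf ht hBt ↦ ?_⟩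
  have hsqrt : 0 < √(N : ℝ) := Real.sqrt_pos.2 (by exact_mod_cast hN)
  set s : ℝ → ℝ := fun α ↦ ‖weylSum N f α‖ / (2 * √N) with hs
  have hlayer := sum_rpow_le_of_card_le_rpow (J := grid M) (s := s) (p := p) (by linarith) hκp ht
    (by positivity) (fun α _ ↦ div_le_one_of_le₀ (norm_weylSum_le_two_mul_sqrt hN hf α)
      (by positivity))
    fun η htη hη1 ↦ hcard N M f η hN hNM hf (ht.trans_le htη) hη1 (by grw [hBt, htη])
  have hfilter (α : ℝ) : 4 * t * √N ≤ ‖weylSum N f α‖ ↔ 2 * t ≤ s α := by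
    rw [hs, le_div_iff₀ (by positivity)]
    ring_nf
  simp_rw [hfilter]
  calc ∑ α ∈ grid M with 2 * t ≤ s α, ‖weylSum N f α‖ ^ p
      = (2 * √N) ^ p * ∑ α ∈ grid M with 2 * t ≤ s α, s α ^ p := by
        rw [mul_sum]
        refine sum_congr rfl fun α _ ↦ ?_
        rw [← Real.mul_rpow (by positivity) (by positivity), hs,
          mul_div_cancel₀ _ (by positivity)]
    _ ≤ (2 * √N) ^ p * (K * (B * M / N ^ 2)) := by gcongr
    _ = 2 ^ p * K * B * M * (N : ℝ) ^ (p / 2 - 2) := by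
        rw [Real.mul_rpow zero_le_two hsqrt.le, Real.sqrt_eq_rpow, ← Real.rpow_mul N.cast_nonneg,
          Real.rpow_sub (by positivity), one_div_mul_eq_div, Real.rpow_two]
        ring

lemma four_mul_sqrt_rpow_mul_rpow_eq {B N p : ℝ} (hB : 0 ≤ B) (hN : 0 < N) :
    (4 * (B / N) ^ (1 / 8 : ℝ) * √N) ^ (p - 4) * N ^ ((p - 4) / 8) =
      (4 * B ^ (1 / 8 : ℝ)) ^ (p - 4) * N ^ (p / 2 - 2) := by
  rw [Real.div_rpow hB hN.le, mul_div_assoc', div_mul_eq_mul_div,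
    Real.div_rpow (by positivity) (by positivity), Real.mul_rpow (by positivity) (by positivity),
    ← Real.rpow_mul hN.le, one_div_mul_eq_div, div_mul_cancel₀ _ (by positivity),
    Real.sqrt_eq_rpow, ← Real.rpow_mul hN.le]
  ring_nf

/- Values above `N ^ (3 / 8)` are controlled by the large values estimate; the fourth moment, with
its loss of `N ^ ε`, suffices for the remaining ones. -/
lemma exists_sum_norm_weylSum_rpow_le {p : ℝ} (hp : 4 < p) :
    ∃ C : ℝ, 0 < C ∧ ∀ (N M : ℕ) (f : ℤ → ℂ), 1 ≤ N → 2 * N ^ 2 < M →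
      ∑ x ∈ Icc (-N : ℤ) N, ‖f x‖ ^ 2 ≤ 1 →
      ∑ α ∈ grid M, ‖weylSum N f α‖ ^ p ≤ C * M * (N : ℝ) ^ (p / 2 - 2) := by
  obtain ⟨B, C, hB, hC, hlarge⟩ := exists_sum_filter_le_norm_weylSum_rpow_le hp
  obtain ⟨C₄, hC₄, hfour⟩ := exists_sum_norm_weylSum_pow_four_le (ε := (p - 4) / 8) (by linarith)
  refine ⟨C + (4 * B ^ (1 / 8 : ℝ)) ^ (p - 4) * C₄, by positivity, fun N M f hN hNM hf ↦ ?_⟩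
  have hN0 : (0 : ℝ) < N := by exact_mod_cast hN
  set t : ℝ := (B / N) ^ (1 / 8 : ℝ) with ht
  have ht8 : N * t ^ 8 = B := by
    rw [ht, ← Real.rpow_mul_natCast (by positivity)]
    norm_num
    field_simp
  have hhigh := hlarge N M f t hN (by omega) hf (by positivity) ht8.ge
  have hlow := sum_filter_not_le_rpow_le (grid M) (s := fun α ↦ ‖weylSum N f α‖)
    (T := 4 * t * √N) (Nat.ofNat_nonneg 4) hp.le (fun _ ↦ norm_nonneg _) (by positivity)
  simp_rw [Real.rpow_ofNat] at hlow
  grw [hfour N M f hN hNM, hf] at hlow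
  calc ∑ α ∈ grid M, ‖weylSum N f α‖ ^ p
      ≤ C * M * (N : ℝ) ^ (p / 2 - 2) +
          (4 * t * √N) ^ (p - 4) * (C₄ * M * (N : ℝ) ^ ((p - 4) / 8) * 1 ^ 2) := by
        rw [← sum_filter_add_sum_filter_not (grid M) (4 * t * √N ≤ ‖weylSum N f ·‖)]
        exact add_le_add hhigh hlow
    _ = C * M * (N : ℝ) ^ (p / 2 - 2) +
          (4 * t * √N) ^ (p - 4) * (N : ℝ) ^ ((p - 4) / 8) * C₄ * M := by ring
    _ = (C + (4 * B ^ (1 / 8 : ℝ)) ^ (p - 4) * C₄) * M * (N : ℝ) ^ (p / 2 - 2) := by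
        rw [ht, four_mul_sqrt_rpow_mul_rpow_eq (by positivity) hN0]
        ring

/-! ### The circle method -/

/-- The multilinear sum `∑ F₁(x₁)⋯F_n(x_n)` over the lattice points of the box `[-N, N]^n` that lie
on the sphere of radius `lam^{1/2}`. -/
def sphereSum {n : ℕ} (N lam : ℕ) (F : Fin n → ℤ → ℂ) : ℂ :=
  ∑ x ∈ Fintype.piFinset (fun _ : Fin n ↦ Icc (-N : ℤ) N) with ∑ i, x i ^ 2 = (lam : ℤ),
    ∏ i, F i (x i)

lemma abs_sum_sq_sub_lt {n N lam : ℕ} (hlam : lam ≤ n * N ^ 2) {x : Fin n → ℤ}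
    (hx : x ∈ Fintype.piFinset fun _ : Fin n ↦ Icc (-N : ℤ) N) :
    |∑ i, x i ^ 2 - (lam : ℤ)| < (n * N ^ 2 + 1 : ℕ) := by
  have hsum : ∑ i, x i ^ 2 ≤ n * (N : ℤ) ^ 2 := by
    calc ∑ i, x i ^ 2 ≤ ∑ _i : Fin n, (N : ℤ) ^ 2 := sum_le_sum fun i _ ↦ by
          have := mem_Icc.1 (Fintype.mem_piFinset.1 hx i)
          exact sq_le_sq' this.1 this.2
      _ = n * (N : ℤ) ^ 2 := by rw [sum_const, card_univ, Fintype.card_fin, nsmul_eq_mul]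
  have hsum0 : 0 ≤ ∑ i, x i ^ 2 := sum_nonneg fun i _ ↦ sq_nonneg (x i)
  zify at hlam
  rw [abs_lt]
  push_cast
  constructor <;> linarith

lemma mul_sphereSum_eq_sum_grid {n N lam : ℕ} (F : Fin n → ℤ → ℂ) (hlam : lam ≤ n * N ^ 2) :
    ((n * N ^ 2 + 1 : ℕ) : ℂ) * sphereSum N lam F =
      ∑ α ∈ grid (n * N ^ 2 + 1), e (-(lam * α)) * ∏ i, weylSum N (F i) α := by
  have hexpand (α : ℝ) : e (-(lam * α)) * ∏ i, weylSum N (F i) α =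
      ∑ x ∈ Fintype.piFinset fun _ : Fin n ↦ Icc (-N : ℤ) N,
        (∏ i, F i (x i)) * e ((∑ i, x i ^ 2 - lam : ℤ) * α) := by
    simp_rw [weylSum, prod_univ_sum, mul_sum]
    refine sum_congr rfl fun x _ ↦ ?_
    rw [prod_mul_distrib, ← e_sum, mul_left_comm, ← AddChar.map_add_eq_mul, ← sum_mul]
    push_cast
    ring_nf
  simp_rw [hexpand]
  rw [sum_comm, sphereSum, sum_filter, mul_sum]
  refine sum_congr rfl fun x hx ↦ ?_
  rw [← mul_sum, sum_grid_e (Nat.succ_pos _)]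
  by_cases hsphere : ∑ i, x i ^ 2 = (lam : ℤ)
  · rw [if_pos hsphere, if_pos (by rw [hsphere, sub_self]; exact dvd_zero _), mul_comm]
  · have hdvd : ¬ ((n * N ^ 2 + 1 : ℕ) : ℤ) ∣ ∑ i, x i ^ 2 - lam := fun h ↦
      hsphere (sub_eq_zero.1 (Int.eq_zero_of_abs_lt_dvd h (abs_sum_sq_sub_lt hlam hx)))
    rw [if_neg hsphere, if_neg hdvd, mul_zero, mul_zero]

lemma prod_le_sum_pow_card {ι : Type*} {s : Finset ι} (hs : s.Nonempty) {x : ι → ℝ}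
    (hx : ∀ i ∈ s, 0 ≤ x i) : ∏ i ∈ s, x i ≤ ∑ i ∈ s, x i ^ #s := by
  obtain ⟨j, hj, hmax⟩ := exists_max_image s x hs
  calc ∏ i ∈ s, x i ≤ ∏ _i ∈ s, x j := prod_le_prod hx hmax
    _ = x j ^ #s := prod_const _
    _ ≤ ∑ i ∈ s, x i ^ #s :=
        single_le_sum (f := fun i ↦ x i ^ #s) (fun i hi ↦ pow_nonneg (hx i hi) _) hj

lemma exists_norm_sphereSum_le_of_sum_sq_le_one {n : ℕ} (hn : 5 ≤ n) :
    ∃ C : ℝ, 0 < C ∧ ∀ (N lam : ℕ) (F : Fin n → ℤ → ℂ), 1 ≤ N → lam ≤ n * N ^ 2 →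
      (∀ i, ∑ x ∈ Icc (-N : ℤ) N, ‖F i x‖ ^ 2 ≤ 1) →
      ‖sphereSum N lam F‖ ≤ C * (N : ℝ) ^ ((n : ℝ) / 2 - 2) := by
  obtain ⟨C, hC, hmoment⟩ := exists_sum_norm_weylSum_rpow_le (p := n) (by exact_mod_cast hn)
  simp_rw [Real.rpow_natCast] at hmoment
  have : Nonempty (Fin n) := ⟨⟨0, by omega⟩⟩
  refine ⟨n * C, by positivity, fun N lam F hN hlam hF ↦ ?_⟩
  set M := n * N ^ 2 + 1 with hM
  have hNM : 2 * N ^ 2 < M := by nlinarith [Nat.zero_le (N ^ 2)]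
  have hM0 : (0 : ℝ) < M := by positivity
  refine le_of_mul_le_mul_left ?_ hM0
  calc M * ‖sphereSum N lam F‖ = ‖(M : ℂ) * sphereSum N lam F‖ := by
        rw [norm_mul, Complex.norm_natCast]
    _ ≤ ∑ α ∈ grid M, ∏ i, ‖weylSum N (F i) α‖ := by
        rw [mul_sphereSum_eq_sum_grid F hlam]
        exact norm_sum_le_of_le _ fun α _ ↦ by rw [norm_mul, norm_e, one_mul, norm_prod]
    _ ≤ ∑ α ∈ grid M, ∑ i, ‖weylSum N (F i) α‖ ^ n := by
        gcongr with α
        simpa using prod_le_sum_pow_card univ_nonempty fun i _ ↦ norm_nonneg (weylSum N (F i) α)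
    _ = ∑ i, ∑ α ∈ grid M, ‖weylSum N (F i) α‖ ^ n := sum_comm
    _ ≤ ∑ _i : Fin n, C * M * (N : ℝ) ^ ((n : ℝ) / 2 - 2) := by
        gcongr with i
        exact hmoment N M (F i) hN hNM (hF i)
    _ = M * (n * C * (N : ℝ) ^ ((n : ℝ) / 2 - 2)) := by
        rw [sum_const, card_univ, Fintype.card_fin, nsmul_eq_mul]
        ring

lemma sphereSum_eq_zero {n : ℕ} (N lam : ℕ) {F : Fin n → ℤ → ℂ} {i : Fin n}
    (hi : ∑ x ∈ Icc (-N : ℤ) N, ‖F i x‖ ^ 2 = 0) : sphereSum N lam F = 0 := by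
  refine sum_eq_zero fun x hx ↦ prod_eq_zero (mem_univ i) ?_
  have hFi := (sum_eq_zero_iff_of_nonneg fun x _ ↦ by positivity).1 hi (x i)
    (Fintype.mem_piFinset.1 (mem_filter.1 hx).1 i)
  simpa using hFi

lemma sphereSum_const_mul {n : ℕ} (N lam : ℕ) (a : Fin n → ℂ) (F : Fin n → ℤ → ℂ) :
    sphereSum N lam (fun i x ↦ a i * F i x) = (∏ i, a i) * sphereSum N lam F := by
  simp_rw [sphereSum, prod_mul_distrib, mul_sum]

lemma exists_norm_sphereSum_le {n : ℕ} (hn : 5 ≤ n) :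
    ∃ C : ℝ, 0 < C ∧ ∀ (N lam : ℕ) (F : Fin n → ℤ → ℂ), 1 ≤ N → lam ≤ n * N ^ 2 →
      ‖sphereSum N lam F‖ ≤
        C * (N : ℝ) ^ ((n : ℝ) / 2 - 2) * ∏ i, √(∑ x ∈ Icc (-N : ℤ) N, ‖F i x‖ ^ 2) := by
  obtain ⟨C, hC, hunit⟩ := exists_norm_sphereSum_le_of_sum_sq_le_one hn
  refine ⟨C, hC, fun N lam F hN hlam ↦ ?_⟩
  set q : Fin n → ℝ := fun i ↦ ∑ x ∈ Icc (-N : ℤ) N, ‖F i x‖ ^ 2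
  by_cases hzero : ∃ i, q i = 0
  · obtain ⟨i, hi⟩ := hzero
    rw [sphereSum_eq_zero N lam hi, norm_zero]
    positivity
  · have hq0 (i : Fin n) : 0 < q i := by
      have hqi : 0 ≤ q i := by positivity
      exact hqi.lt_of_ne fun h ↦ hzero ⟨i, h.symm⟩
    set G : Fin n → ℤ → ℂ := fun i x ↦ (√(q i) : ℂ)⁻¹ * F i x with hG
    have hnorm (i : Fin n) : ∑ x ∈ Icc (-N : ℤ) N, ‖G i x‖ ^ 2 ≤ 1 := by
      simp_rw [hG, norm_mul, mul_pow, ← mul_sum]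
      rw [norm_inv, Complex.norm_real, inv_pow, Real.norm_eq_abs, sq_abs, Real.sq_sqrt (hq0 i).le]
      exact (inv_mul_cancel₀ (hq0 i).ne').le
    have hscale : sphereSum N lam F = (∏ i, (√(q i) : ℂ)) * sphereSum N lam G := by
      rw [← sphereSum_const_mul]
      congr 1
      ext i x
      have : (√(q i) : ℂ) ≠ 0 := Complex.ofReal_ne_zero.2 (Real.sqrt_pos.2 (hq0 i)).ne'
      rw [hG, mul_inv_cancel_left₀ this]
    rw [hscale, norm_mul, norm_prod, mul_comm]
    simp_rw [Complex.norm_real, Real.norm_of_nonneg (Real.sqrt_nonneg _)]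
    gcongr
    exact hunit N lam G hN hlam hnorm

lemma pow_sub_two_mul_prod_inv_mul_rpow {n : ℕ} (hn : 2 ≤ n) {N : ℝ} (hN : 0 < N)
    (q : Fin n → ℝ) :
    N ^ (n - 2) * ∏ i, (N⁻¹ * q i) ^ ((1 : ℝ) / 2) =
      N ^ ((n : ℝ) / 2 - 2) * ∏ i, √(q i) := by
  simp_rw [← Real.sqrt_eq_rpow, Real.sqrt_mul (inv_nonneg.2 hN.le)]
  rw [prod_mul_distrib, prod_const, card_univ, Fintype.card_fin, ← mul_assoc]
  congr 1
  rw [← Real.rpow_natCast, ← Real.rpow_natCast, Real.sqrt_eq_rpow, Real.inv_rpow hN.le,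
    ← Real.rpow_neg hN.le, ← Real.rpow_mul hN.le, ← Real.rpow_add hN]
  push_cast [hn]
  ring_nf

lemma mulAvg_eq_sphereSum {n N lam : ℕ} (hlam : lam ≤ N ^ 2) (f : Fin n → ℤ → ℂ) (y : ℤ) :
    mulAvg n lam f y =
      (sphereCount n lam : ℂ)⁻¹ * sphereSum N lam (fun i x ↦ f i (y - x)) := by
  have hbox : {x : Fin n → ℤ | ∑ i, x i ^ 2 = (lam : ℤ)} =
      ({x ∈ Fintype.piFinset fun _ : Fin n ↦ Icc (-N : ℤ) N | ∑ i, x i ^ 2 = (lam : ℤ)} :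
        Finset (Fin n → ℤ)) := by
    ext x
    simp only [Set.mem_ofPred_eq, coe_filter, Fintype.mem_piFinset, mem_Icc, iff_and_self]
    intro hx i
    refine abs_le_of_sq_le_sq' ?_ N.cast_nonneg
    calc x i ^ 2 ≤ ∑ i, x i ^ 2 :=
          single_le_sum (f := fun i ↦ x i ^ 2) (fun i _ ↦ sq_nonneg _) (mem_univ i)
      _ ≤ (N : ℤ) ^ 2 := by rw [hx]; exact_mod_cast hlam
  rw [mulAvg, hbox, finsum_mem_coe_finset, sphereSum]

lemma add_half_le_natCast_toNat_round {x : ℝ} (hx : 1 ≤ x) :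
    x + 1 / 2 ≤ (round (2 * x)).toNat := by
  have hround : x + 1 / 2 ≤ round (2 * x) := by
    linarith [abs_le.1 (abs_sub_round (2 * x))]
  exact hround.trans (by exact_mod_cast Int.self_le_toNat _)

/-- for `n ≥ 5` there is a constant `C = C(n)` such that for every
`lam ≥ 1`, all `f₁,…,f_n` and all `y`,
`|A_lam[f₁,…,f_n](y)| ≤ C (N_lam^{n-2}/r_n(lam)) ∏_i (N_lam⁻¹ ∑_{|x| ≤ N_lam} |f_i(y-x)|²)^{1/2}`,
where `N_lam` is the nearest integer to `2 lam^{1/2}`. -/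
theorem statement13 (n : ℕ) (hn : 5 ≤ n) :
    ∃ C : ℝ, 0 < C ∧ ∀ lam : ℕ, 1 ≤ lam → ∀ f : Fin n → ℤ → ℂ, ∀ y : ℤ,
      ‖mulAvg n lam f y‖ ≤
        C * ((((round (2 * Real.sqrt lam)).toNat : ℝ)) ^ (n - 2) / (sphereCount n lam : ℝ)) *
          ∏ i, ((((round (2 * Real.sqrt lam)).toNat : ℝ))⁻¹ *
              ∑ x ∈ Finset.Icc (-((round (2 * Real.sqrt lam)).toNat : ℤ))
                  ((round (2 * Real.sqrt lam)).toNat : ℤ), ‖f i (y - x)‖ ^ 2) ^ ((1 : ℝ) / 2) := by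
  obtain ⟨C, hC, hsphere⟩ := exists_norm_sphereSum_le hn
  refine ⟨C, hC, fun lam hlam f y ↦ ?_⟩
  have hsqrt : 1 ≤ √(lam : ℝ) := Real.one_le_sqrt.2 (by exact_mod_cast hlam)
  have hround := add_half_le_natCast_toNat_round hsqrt
  generalize (round (2 * Real.sqrt lam)).toNat = N at *
  have hN : 1 ≤ N := by exact_mod_cast (show (1 : ℝ) ≤ N by linarith)
  have hlamN : lam ≤ N ^ 2 := by
    exact_mod_cast (Real.sqrt_le_left N.cast_nonneg).1 (show √(lam : ℝ) ≤ N by linarith)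
  have hlamN' : lam ≤ n * N ^ 2 := hlamN.trans (Nat.le_mul_of_pos_left _ (by omega))
  rw [mulAvg_eq_sphereSum hlamN, norm_mul, norm_inv, Complex.norm_natCast, mul_div_assoc',
    div_mul_eq_mul_div, mul_assoc,
    pow_sub_two_mul_prod_inv_mul_rpow (by omega) (by exact_mod_cast hN), ← mul_assoc,
    inv_mul_eq_div]
  gcongr
  exact hsphere N lam _ hN hlamN'
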